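/- arXiv:2402.03983 — 3 statements merged into one kernel-verified Lean document; each statement's English description precedes it below -/
import Mathlib

section
/- Let m ≥ 2 be an integer and M = {M_β}_{|β|≤m} ⊆ ℂ a prescribed family of moments. Then d_m is finite on 𝓜_m^M × 𝓜_m^M, so (𝓜_m^M, d_m) is a metric space, and this metric space is not complete: there exists a d_m-Cauchy sequence in 𝓜_m^M with no limit in 𝓜_m^M. -/
open MeasureTheory Filter Topology
open scoped ENNReal NNReal

noncomputable section
open scoped Classical


abbrev Vd (d : ℕ) := EuclideanSpace ℝ (Fin d)

/-- The total variation measure `|μ|` of a complex measure (realized as the sum of the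
total variations of its real and imaginary parts). -/
def ctv {d : ℕ} (μ : ComplexMeasure (Vd d)) : Measure (Vd d) :=
  μ.re.totalVariation + μ.im.totalVariation

/-- Integral of a complex-valued function against a complex measure. -/
def cint {d : ℕ} (μ : ComplexMeasure (Vd d)) (f : Vd d → ℂ) : ℂ :=
  ((∫ x, f x ∂μ.re.toJordanDecomposition.posPart) -
    (∫ x, f x ∂μ.re.toJordanDecomposition.negPart)) +
  Complex.I * ((∫ x, f x ∂μ.im.toJordanDecomposition.posPart) -
    (∫ x, f x ∂μ.im.toJordanDecomposition.negPart))

/-- The Fourier transform `μ̂(ξ) = ∫ e^{-i x·ξ} dμ(x)` of a complex measure. -/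
def ftc {d : ℕ} (μ : ComplexMeasure (Vd d)) (ξ : Vd d) : ℂ :=
  cint μ (fun x => Complex.exp (-(Complex.I) * ((∑ i, x i * ξ i : ℝ) : ℂ)))

/-- The Fourier-based distance `d_m(μ,ν) = sup_{ξ ≠ 0} |μ̂(ξ)-ν̂(ξ)|/|ξ|^m` (valued in `ℝ≥0∞`). -/
def dm {d : ℕ} (m : ℕ) (μ ν : ComplexMeasure (Vd d)) : ℝ≥0∞ :=
  ⨆ ξ : {ξ : Vd d // ξ ≠ 0}, ENNReal.ofReal (‖ftc μ ξ - ftc ν ξ‖ / ‖(ξ : Vd d)‖ ^ m)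

/-- The finite set of multi-indices `β ∈ ℕ^d` with `|β| ≤ m`. -/
def multiIdx (d m : ℕ) : Finset (Fin d → ℕ) :=
  (Fintype.piFinset fun _ : Fin d => Finset.range (m + 1)).filter fun γ => ∑ i, γ i ≤ m

/-- The set `𝓜_m^M` of complex measures with finite `m`-th absolute moment and
moments prescribed by `M`. -/
def MomentSet (d m : ℕ) (M : (Fin d → ℕ) → ℂ) : Set (ComplexMeasure (Vd d)) :=
  {μ | (∫⁻ x, (‖x‖₊ : ℝ≥0∞) ^ m ∂(ctv μ)) < ⊤ ∧
       ∀ β : Fin d → ℕ, (∑ i, β i) ≤ m →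
         cint μ (fun x => ∏ i, ((x i : ℂ)) ^ (β i)) = M β}

/-- The polynomial `P(ξ) = Σ_{|γ|≤m} (M_γ/γ!) (-iξ)^γ`. -/
def Ppoly (d m : ℕ) (M : (Fin d → ℕ) → ℂ) (ξ : Vd d) : ℂ :=
  ∑ γ ∈ multiIdx d m,
    (M γ / ∏ i, (Nat.factorial (γ i) : ℂ)) * ∏ i, (-(Complex.I) * (ξ i)) ^ (γ i)

/-- The function `φ_δ`. -/
def phiFun (d m : ℕ) (M : (Fin d → ℕ) → ℂ) (δ : ℝ) (ξ : Vd d) : ℂ :=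
  if ξ = 0 then Ppoly d m M 0
  else (Ppoly d m M ξ +
      ((‖ξ‖ ^ (m + 2) * Real.sin (1 / ‖ξ‖ ^ m) * Real.exp (-δ / ‖ξ‖ ^ 2) : ℝ) : ℂ)) *
    ((Real.exp (-‖ξ‖ ^ (2 * m)) : ℝ) : ℂ)

/-- The function `f_δ`. -/
def fdelta (d m : ℕ) (δ : ℝ) (ξ : Vd d) : ℝ :=
  if ξ = 0 then 0
  else ‖ξ‖ ^ (m + 2) * Real.sin (1 / ‖ξ‖ ^ m) * Real.exp (-δ / ‖ξ‖ ^ 2)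

/-- First-order partial derivative in the `i`-th coordinate direction. -/
def pderiv1 {d : ℕ} {F : Type*} [NormedAddCommGroup F] [NormedSpace ℝ F]
    (i : Fin d) (f : Vd d → F) : Vd d → F :=
  fun ξ => fderiv ℝ f ξ (EuclideanSpace.single i 1)

/-- The multi-index partial derivative `D^β = ∂_{ξ_1}^{β_1} ⋯ ∂_{ξ_d}^{β_d}`. -/
def Dmulti {d : ℕ} {F : Type*} [NormedAddCommGroup F] [NormedSpace ℝ F]
    (β : Fin d → ℕ) (f : Vd d → F) : Vd d → F :=
  (List.ofFn fun i : Fin d => (pderiv1 i)^[β i]).foldr (fun op g => op g) f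

/-!
Two measures with the same moments up to order `m` have Fourier transforms with the same Taylor
polynomial of degree `m - 1` at the origin, so their difference is `O(|ξ|^m)`, with a constant given
by the `m`-th absolute moments: `d_m` is finite.

For incompleteness, start from a finitely supported measure with the prescribed moments and add a
lacunary series of difference measures `∑ i, (-1)^(m+1-i) C(m+1, i) δ_{ih}` with steps `h = R^k e`
and weights `1 / ((k + 1) R^(km))`, where `R = m + 2`. A difference of order `m + 1` annihilates the
polynomials of degree at most `m`, so no moment changes. Put `t = |⟨e, ξ⟩|`. The Fourier transform
of the `k`-th block is at most `2^(m+1) / (k + 1) * t^m * min(R^k t, 1 / (R^k t))`, and as the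
minima decay geometrically on both sides of the scale `R^k = 1 / t`, the blocks with index at least
`l` add up to `O(|ξ|^m / (l + 1))`: the partial sums are `d_m`-Cauchy. A `d_m`-limit would have the
Fourier transform of the full series, hence be equal to it. But the `k`-th block puts mass
`(m + 1) / ((k + 1) R^(km))` at `R^k e`, so the `m`-th absolute moment of the full series dominates
the harmonic series.
-/

section VectorIntegral

variable {X E F F' G H : Type*} [MeasurableSpace X] [NormedAddCommGroup E] [NormedSpace ℝ E]
  [NormedAddCommGroup F] [NormedSpace ℝ F] [NormedAddCommGroup F'] [NormedSpace ℝ F']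
  [NormedAddCommGroup G] [NormedSpace ℝ G] [NormedAddCommGroup H] [NormedSpace ℝ H]

lemma vectorIntegral_congr_transpose {μ : VectorMeasure X F} {ν : VectorMeasure X F'}
    {B : E →L[ℝ] F →L[ℝ] G} {C : E →L[ℝ] F' →L[ℝ] G} {f : X → E}
    (hμ : μ.Integrable f) (hν : ν.Integrable f) (h : μ.transpose B = ν.transpose C) :
    ∫ᵛ x, f x ∂[B; μ] = ∫ᵛ x, f x ∂[C; ν] := by
  rw [VectorMeasure.integral_eq_setToFun_transpose hμ,
    VectorMeasure.integral_eq_setToFun_transpose hν]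
  simp only [h]

lemma clm_vectorIntegral [CompleteSpace G] [CompleteSpace H] {μ : VectorMeasure X F}
    {B : E →L[ℝ] F →L[ℝ] G} (L : G →L[ℝ] H) {f : X → E} (hf : μ.Integrable f) :
    L (∫ᵛ x, f x ∂[B; μ]) =
      ∫ᵛ x, f x ∂[(ContinuousLinearMap.compL ℝ F G H L).comp B; μ] := by
  refine hf.induction (P := fun f ↦ L (∫ᵛ x, f x ∂[B; μ]) =
      ∫ᵛ x, f x ∂[(ContinuousLinearMap.compL ℝ F G H L).comp B; μ]) ?_ ?_ ?_ ?_
  · intro c s hs hμs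
    simp only [VectorMeasure.integral_eq_setToFun, setToFun_indicator_const _ hs hμs.ne]
    rfl
  · intro f g _ hf hg hLf hLg
    rw [VectorMeasure.integral_add hf hg, VectorMeasure.integral_add hf hg, map_add, hLf, hLg]
  · exact isClosed_eq (L.continuous.comp VectorMeasure.continuous_integral)
      VectorMeasure.continuous_integral
  · intro f g hfg _ hLf
    rwa [← VectorMeasure.integral_congr_ae hfg, ← VectorMeasure.integral_congr_ae hfg]

lemma vectorIntegral_eq_integral_posPart_sub {s : SignedMeasure X} {f : X → E}
    (hf : s.Integrable f) :
    ∫ᵛ x, f x ∂<•s =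
      (∫ x, f x ∂s.toJordanDecomposition.posPart) - ∫ x, f x ∂s.toJordanDecomposition.negPart := by
  rw [VectorMeasure.Integrable, ← s.totalVariation_eq_variation] at hf
  conv_lhs => rw [← s.toSignedMeasure_toJordanDecomposition]
  rw [JordanDecomposition.toSignedMeasure, VectorMeasure.integral_sub_vectorMeasure,
    VectorMeasure.integral_toSignedMeasure, VectorMeasure.integral_toSignedMeasure]
  · rw [VectorMeasure.Integrable, Measure.variation_toSignedMeasure]
    exact hf.left_of_add_measure
  · rw [VectorMeasure.Integrable, Measure.variation_toSignedMeasure]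
    exact hf.right_of_add_measure

lemma variation_re_le (μ : ComplexMeasure X) : μ.re.variation ≤ μ.variation :=
  VectorMeasure.variation_le_of_forall_enorm_le fun s _ ↦
    (enorm_le_iff_norm_le.2 (Complex.abs_re_le_norm (μ s))).trans
      (VectorMeasure.enorm_measure_le_variation μ s)

lemma variation_im_le (μ : ComplexMeasure X) : μ.im.variation ≤ μ.variation :=
  VectorMeasure.variation_le_of_forall_enorm_le fun s _ ↦
    (enorm_le_iff_norm_le.2 (Complex.abs_im_le_norm (μ s))).trans
      (VectorMeasure.enorm_measure_le_variation μ s)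

lemma enorm_le_enorm_re_add_enorm_im (z : ℂ) : ‖z‖ₑ ≤ ‖z.re‖ₑ + ‖z.im‖ₑ := by
  rw [← ofReal_norm, ← ofReal_norm, ← ofReal_norm,
    ← ENNReal.ofReal_add (norm_nonneg _) (norm_nonneg _)]
  exact ENNReal.ofReal_le_ofReal (Complex.norm_le_abs_re_add_abs_im z)

lemma variation_le_variation_re_add_im (μ : ComplexMeasure X) :
    μ.variation ≤ μ.re.variation + μ.im.variation :=
  VectorMeasure.variation_le_of_forall_enorm_le fun s _ ↦
    (enorm_le_enorm_re_add_enorm_im (μ s)).trans <|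
      add_le_add (VectorMeasure.enorm_measure_le_variation μ.re s)
        (VectorMeasure.enorm_measure_le_variation μ.im s)

instance instIsFiniteMeasureVariation (μ : ComplexMeasure X) : IsFiniteMeasure μ.variation := by
  have h := variation_le_variation_re_add_im μ
  rw [← μ.re.totalVariation_eq_variation, ← μ.im.totalVariation_eq_variation] at h
  exact isFiniteMeasure_of_le _ h

theorem vectorIntegral_const_mul (μ : ComplexMeasure X) (c : ℂ) (f : X → ℂ) :
    ∫ᵛ x, c * f x ∂[.mul ℝ ℂ; μ] = c * ∫ᵛ x, f x ∂[.mul ℝ ℂ; μ] :=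
  setToFun_smul _ (fun c s x ↦ by
    change c * x * μ s = c * (x * μ s)
    ring) c f

theorem vectorIntegral_mul_eq_re_add_im {μ : ComplexMeasure X} {f : X → ℂ} (hf : μ.Integrable f) :
    ∫ᵛ x, f x ∂[.mul ℝ ℂ; μ] = ∫ᵛ x, f x ∂<•μ.re + Complex.I * ∫ᵛ x, f x ∂<•μ.im := by
  have hre : μ.re.Integrable f := hf.mono_measure (variation_re_le μ)
  have him : μ.im.Integrable f := hf.mono_measure (variation_im_le μ)
  let smulR : ℂ →L[ℝ] ℝ →L[ℝ] ℂ := (ContinuousLinearMap.lsmul ℝ ℝ).flip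
  let mulI : ℂ →L[ℝ] ℂ := .mul ℝ ℂ Complex.I
  let reB : ℂ →L[ℝ] ℂ →L[ℝ] ℂ := smulR.bilinearComp (.id ℝ ℂ) Complex.reCLM
  let imB : ℂ →L[ℝ] ℂ →L[ℝ] ℂ :=
    ((ContinuousLinearMap.compL ℝ ℝ ℂ ℂ mulI).comp smulR).bilinearComp (.id ℝ ℂ) Complex.imCLM
  have hB : ContinuousLinearMap.mul ℝ ℂ = reB + imB := by
    ext z w
    change z * w = w.re • z + Complex.I * (w.im • z)
    rw [Complex.real_smul, Complex.real_smul]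
    linear_combination -z * Complex.re_add_im w
  calc
    ∫ᵛ x, f x ∂[.mul ℝ ℂ; μ] = ∫ᵛ x, f x ∂[reB; μ] + ∫ᵛ x, f x ∂[imB; μ] := by
      rw [hB, VectorMeasure.integral_add_cbm hf]
    _ = ∫ᵛ x, f x ∂<•μ.re + mulI (∫ᵛ x, f x ∂<•μ.im) :=
      congrArg₂ (· + ·) (vectorIntegral_congr_transpose hf hre rfl)
        ((vectorIntegral_congr_transpose hf him rfl).trans (clm_vectorIntegral mulI him).symm)

end VectorIntegral

section Cint

variable {d : ℕ}

lemma ctv_eq_variation_add (μ : ComplexMeasure (Vd d)) :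
    ctv μ = μ.re.variation + μ.im.variation := by
  rw [ctv, SignedMeasure.totalVariation_eq_variation, SignedMeasure.totalVariation_eq_variation]

lemma cint_eq_vectorIntegral {μ : ComplexMeasure (Vd d)} {f : Vd d → ℂ} (hf : μ.Integrable f) :
    cint μ f = ∫ᵛ x, f x ∂[.mul ℝ ℂ; μ] := by
  rw [vectorIntegral_mul_eq_re_add_im hf, cint,
    vectorIntegral_eq_integral_posPart_sub (hf.mono_measure (variation_re_le μ)),
    vectorIntegral_eq_integral_posPart_sub (hf.mono_measure (variation_im_le μ))]

end Cint

section Atomic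

variable {ι X : Type*} [MeasurableSpace ι] [MeasurableSpace X]

/-- The complex measure `∑ i, w i • δ_{x i}` with weights `w` and nodes `x`. It is encoded as the
push-forward under `x` of the measure with density `w` against the counting measure, so it has the
junk value `0` when `w` is not absolutely summable. -/
def atomicMeasure (w : ι → ℂ) (x : ι → X) : ComplexMeasure X :=
  (Measure.count.withDensityᵥ w).map x

variable [MeasurableSingletonClass ι] {w : ι → ℂ}

lemma withDensityᵥ_count_singleton (hw : Summable (‖w ·‖)) (i : ι) :
    Measure.count.withDensityᵥ w {i} = w i := by
  rw [withDensityᵥ_apply (integrable_count_iff.2 hw) (measurableSet_singleton i)]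
  simp

variable [Countable ι] {x : ι → X}

theorem lintegral_variation_atomicMeasure_le {g : X → ℝ≥0∞} (hg : Measurable g)
    (hw : Summable (‖w ·‖)) :
    ∫⁻ y, g y ∂(atomicMeasure w x).variation ≤ ∑' i, ‖w i‖ₑ * g (x i) := by
  have hx : Measurable x := .of_discrete
  calc
    ∫⁻ y, g y ∂(atomicMeasure w x).variation
      ≤ ∫⁻ y, g y ∂((Measure.count.withDensityᵥ w).variation.map x) :=
      lintegral_mono' VectorMeasure.variation_map_le le_rfl
    _ = ∫⁻ i, g (x i) ∂(Measure.count.withDensity (‖w ·‖ₑ)) := by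
      rw [lintegral_map hg hx, Measure.variation_withDensityᵥ (integrable_count_iff.2 hw)]
    _ = ∑' i, ‖w i‖ₑ * g (x i) := by
      rw [lintegral_withDensity_eq_lintegral_mul _ .of_discrete .of_discrete, lintegral_count]
      rfl

lemma integrable_withDensityᵥ_count {g : ι → ℂ} (hw : Summable (‖w ·‖))
    (hwg : Summable fun i ↦ ‖w i‖ * ‖g i‖) :
    (Measure.count.withDensityᵥ w).Integrable g := by
  rw [VectorMeasure.Integrable, Measure.variation_withDensityᵥ (integrable_count_iff.2 hw),
    integrable_withDensity_iff_integrable_smul₀' AEMeasurable.of_discrete (by simp),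
    integrable_count_iff]
  simpa [norm_smul] using hwg

theorem hasSum_integral_atomicMeasure {f : X → ℂ}
    (hf : StronglyMeasurable f) (hw : Summable (‖w ·‖))
    (hwf : Summable fun i ↦ ‖w i‖ * ‖f (x i)‖) :
    HasSum (fun i ↦ f (x i) * w i) (∫ᵛ y, f y ∂[.mul ℝ ℂ; atomicMeasure w x]) := by
  have hint := integrable_withDensityᵥ_count (g := f ∘ x) hw hwf
  rw [atomicMeasure, VectorMeasure.integral_map .of_discrete hf.aestronglyMeasurable hint]
  have hsum := VectorMeasure.hasSum_setIntegral_iUnion (B := .mul ℝ ℂ) (s := fun i : ι ↦ {i})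
    (fun i ↦ measurableSet_singleton i) (fun i j hij ↦ Set.disjoint_singleton.2 hij)
    hint.restrict
  rw [Set.iUnion_of_singleton, VectorMeasure.restrict_univ] at hsum
  refine hsum.congr_fun ?_
  intro i
  rw [VectorMeasure.integral_singleton, withDensityᵥ_count_singleton hw]
  rfl

end Atomic

section ComplexCharFun

variable {E : Type*} [NormedAddCommGroup E] [InnerProductSpace ℝ E]

lemma continuous_exp_inner_mul_I (ξ : E) :
    Continuous fun x : E ↦ Complex.exp (inner ℝ x ξ * Complex.I) := by
  fun_prop

variable [MeasurableSpace E]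

/-- The characteristic function `ξ ↦ ∫ exp(i⟨x, ξ⟩) dμ(x)` of a complex measure, with the sign
convention of `MeasureTheory.charFun`. -/
def complexCharFun (μ : ComplexMeasure E) (ξ : E) : ℂ :=
  ∫ᵛ x, Complex.exp (inner ℝ x ξ * Complex.I) ∂[.mul ℝ ℂ; μ]

/-- The characteristic function of a signed measure, by its Jordan decomposition. -/
def signedCharFun (s : SignedMeasure E) (ξ : E) : ℂ :=
  charFun s.toJordanDecomposition.posPart ξ - charFun s.toJordanDecomposition.negPart ξ

lemma signedCharFun_neg (s : SignedMeasure E) (ξ : E) :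
    signedCharFun s (-ξ) = starRingEnd ℂ (signedCharFun s ξ) := by
  simp only [signedCharFun, charFun_neg, map_sub]

variable [BorelSpace E]

lemma integrable_exp_inner_mul_I (μ : ComplexMeasure E) (ξ : E) :
    μ.Integrable fun x ↦ Complex.exp (inner ℝ x ξ * Complex.I) :=
  .of_bound (continuous_exp_inner_mul_I ξ).aestronglyMeasurable 1 <|
    ae_of_all _ fun _ ↦ (Complex.norm_exp_ofReal_mul_I _).le

lemma complexCharFun_sub (μ ν : ComplexMeasure E) (ξ : E) :
    complexCharFun (μ - ν) ξ = complexCharFun μ ξ - complexCharFun ν ξ :=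
  VectorMeasure.integral_sub_vectorMeasure (integrable_exp_inner_mul_I μ ξ)
    (integrable_exp_inner_mul_I ν ξ)

lemma complexCharFun_eq_signedCharFun (μ : ComplexMeasure E) (ξ : E) :
    complexCharFun μ ξ = signedCharFun μ.re ξ + Complex.I * signedCharFun μ.im ξ := by
  have hint := integrable_exp_inner_mul_I μ ξ
  rw [complexCharFun, vectorIntegral_mul_eq_re_add_im hint,
    vectorIntegral_eq_integral_posPart_sub (hint.mono_measure (variation_re_le μ)),
    vectorIntegral_eq_integral_posPart_sub (hint.mono_measure (variation_im_le μ))]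
  simp only [signedCharFun, charFun_apply]

variable [SecondCountableTopology E] [CompleteSpace E]

lemma eq_zero_of_signedCharFun_eq_zero {s : SignedMeasure E}
    (h : ∀ ξ, signedCharFun s ξ = 0) : s = 0 := by
  have hparts : s.toJordanDecomposition.posPart = s.toJordanDecomposition.negPart :=
    Measure.ext_of_charFun <| funext fun ξ ↦ sub_eq_zero.1 (h ξ)
  rw [← s.toSignedMeasure_toJordanDecomposition, JordanDecomposition.toSignedMeasure]
  simp only [hparts, sub_self]

-- Evaluating at `±ξ` separates the real from the imaginary part, because the characteristic
-- function of a real measure is Hermitian.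
lemma eq_zero_of_complexCharFun_eq_zero {μ : ComplexMeasure E}
    (h : ∀ ξ, complexCharFun μ ξ = 0) : μ = 0 := by
  have hsplit (ξ : E) : signedCharFun μ.re ξ = 0 ∧ signedCharFun μ.im ξ = 0 := by
    have hpos := h ξ
    have hneg := congrArg (starRingEnd ℂ) (h (-ξ))
    simp only [complexCharFun_eq_signedCharFun, signedCharFun_neg, map_add, map_mul, Complex.conj_I,
      Complex.conj_conj, map_zero] at hpos hneg
    have hre : signedCharFun μ.re ξ = 0 := by linear_combination (hpos + hneg) / 2
    rw [hre, zero_add] at hpos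
    exact ⟨hre, (mul_eq_zero.1 hpos).resolve_left Complex.I_ne_zero⟩
  have hre : μ.re = 0 := eq_zero_of_signedCharFun_eq_zero fun ξ ↦ (hsplit ξ).1
  have him : μ.im = 0 := eq_zero_of_signedCharFun_eq_zero fun ξ ↦ (hsplit ξ).2
  rw [← μ.toComplexMeasure_to_signedMeasure, hre, him]
  rfl

theorem complexCharFun_injective :
    Function.Injective (complexCharFun : ComplexMeasure E → E → ℂ) := fun μ ν h ↦
  sub_eq_zero.1 <| eq_zero_of_complexCharFun_eq_zero fun ξ ↦ by
    rw [complexCharFun_sub, h, sub_self]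

end ComplexCharFun

section Ftc

variable {d : ℕ}

lemma ftc_eq_complexCharFun (μ : ComplexMeasure (Vd d)) (ξ : Vd d) :
    ftc μ ξ = complexCharFun μ (-ξ) := by
  rw [complexCharFun, ← cint_eq_vectorIntegral (integrable_exp_inner_mul_I μ (-ξ)), ftc]
  congr! 3 with x
  simp [PiLp.inner_apply, mul_comm]

end Ftc

section Moments

variable {d m : ℕ} {M : (Fin d → ℕ) → ℂ} {μ ν : ComplexMeasure (Vd d)}

lemma variation_le_ctv (μ : ComplexMeasure (Vd d)) : μ.variation ≤ ctv μ :=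
  (variation_le_variation_re_add_im μ).trans_eq (ctv_eq_variation_add μ).symm

lemma ctv_le_two_smul_variation (μ : ComplexMeasure (Vd d)) :
    ctv μ ≤ (2 : ℝ≥0∞) • μ.variation := by
  rw [ctv_eq_variation_add, two_smul]
  exact add_le_add (variation_re_le μ) (variation_im_le μ)

lemma lintegral_ctv_lt_top_iff {g : Vd d → ℝ≥0∞} :
    ∫⁻ x, g x ∂ctv μ < ⊤ ↔ ∫⁻ x, g x ∂μ.variation < ⊤ := by
  refine ⟨(lintegral_mono' (variation_le_ctv μ) le_rfl).trans_lt, fun h ↦ ?_⟩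
  refine (lintegral_mono' (ctv_le_two_smul_variation μ) le_rfl).trans_lt ?_
  rw [lintegral_smul_measure]
  exact ENNReal.mul_lt_top ENNReal.ofNat_lt_top h

lemma integrable_norm_pow_iff :
    Integrable (fun x ↦ ‖x‖ ^ m) μ.variation ↔ ∫⁻ x, ‖x‖ₑ ^ m ∂μ.variation < ⊤ := by
  rw [Integrable, and_iff_right (by fun_prop), hasFiniteIntegral_iff_enorm]
  simp only [enorm_pow, enorm_norm]

lemma norm_prod_pow_le (x : Vd d) (β : Fin d → ℕ) : ‖∏ i, (x i : ℂ) ^ β i‖ ≤ ‖x‖ ^ ∑ i, β i := by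
  rw [norm_prod, ← Finset.prod_pow_eq_pow_sum]
  gcongr with i
  rw [norm_pow, Complex.norm_real]
  gcongr
  exact PiLp.norm_apply_le x i

lemma integrable_prod_pow (hμ : Integrable (fun x ↦ ‖x‖ ^ m) μ.variation) {β : Fin d → ℕ}
    (hβ : ∑ i, β i ≤ m) : μ.Integrable fun x : Vd d ↦ ∏ i, (x i : ℂ) ^ β i := by
  refine ((integrable_const (1 : ℝ)).add hμ).mono' (by fun_prop) (ae_of_all _ fun x ↦ ?_)
  refine (norm_prod_pow_le x β).trans ?_
  rcases le_total ‖x‖ 1 with hx | hx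
  · exact (pow_le_one₀ (norm_nonneg x) hx).trans (le_add_of_nonneg_right (by positivity))
  · exact (pow_le_pow_right₀ hx hβ).trans (le_add_of_nonneg_left zero_le_one)

theorem mem_momentSet_iff : μ ∈ MomentSet d m M ↔ Integrable (fun x ↦ ‖x‖ ^ m) μ.variation ∧
    ∀ β : Fin d → ℕ, ∑ i, β i ≤ m → ∫ᵛ x, ∏ i, (x i : ℂ) ^ β i ∂[.mul ℝ ℂ; μ] = M β := by
  rw [integrable_norm_pow_iff, ← lintegral_ctv_lt_top_iff]
  refine and_congr_right fun hμ ↦ forall₂_congr fun β hβ ↦ ?_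
  have hint := integrable_norm_pow_iff.2 (lintegral_ctv_lt_top_iff.1 hμ)
  rw [cint_eq_vectorIntegral (integrable_prod_pow hint hβ)]

lemma add_mem_momentSet {N : (Fin d → ℕ) → ℂ} (hμ : μ ∈ MomentSet d m M)
    (hν : ν ∈ MomentSet d m N) : μ + ν ∈ MomentSet d m (M + N) := by
  obtain ⟨hμint, hμmom⟩ := mem_momentSet_iff.1 hμ
  obtain ⟨hνint, hνmom⟩ := mem_momentSet_iff.1 hν
  refine mem_momentSet_iff.2 ⟨(hμint.add_measure hνint).mono_measure
    VectorMeasure.variation_add_le, fun β hβ ↦ ?_⟩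
  rw [VectorMeasure.integral_add_vectorMeasure (integrable_prod_pow hμint hβ)
    (integrable_prod_pow hνint hβ), hμmom β hβ, hνmom β hβ, Pi.add_apply]

lemma sum_mem_momentSet_zero {ι : Type*} {μ : ι → ComplexMeasure (Vd d)} {s : Finset ι}
    (h : ∀ k ∈ s, μ k ∈ MomentSet d m 0) : ∑ k ∈ s, μ k ∈ MomentSet d m 0 := by
  refine Finset.sum_induction μ (· ∈ MomentSet d m 0) (fun _ _ hμ hν ↦ ?_) ?_ h
  · simpa only [add_zero] using add_mem_momentSet hμ hν
  · exact mem_momentSet_iff.2 ⟨by simp, by simp⟩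

end Moments

section Polynomial

variable {d m : ℕ} {M : (Fin d → ℕ) → ℂ} {μ ν : ComplexMeasure (Vd d)}
  {p : MvPolynomial (Fin d) ℂ}

/-- The function `x ↦ p(x₁, …, x_d)` on `ℝ^d` defined by a complex polynomial `p`. -/
def polyFun (p : MvPolynomial (Fin d) ℂ) (x : Vd d) : ℂ :=
  MvPolynomial.eval (fun i ↦ (x i : ℂ)) p

lemma polyFun_eq_sum (p : MvPolynomial (Fin d) ℂ) :
    polyFun p = fun x : Vd d ↦ ∑ β ∈ p.support, p.coeff β * ∏ i, (x i : ℂ) ^ β i :=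
  funext fun _ ↦ MvPolynomial.eval_eq' _ p

lemma sum_le_of_mem_support (hp : p.totalDegree ≤ m) {β : Fin d →₀ ℕ} (hβ : β ∈ p.support) :
    ∑ i, β i ≤ m := by
  rw [← Finsupp.degree_eq_sum]
  exact (MvPolynomial.le_totalDegree hβ).trans hp

lemma integrable_polyFun (hμ : μ ∈ MomentSet d m M) (hp : p.totalDegree ≤ m) :
    μ.Integrable (polyFun p) := by
  rw [polyFun_eq_sum]
  exact .fun_finsetSum _ fun β hβ ↦
    (integrable_prod_pow (mem_momentSet_iff.1 hμ).1 (sum_le_of_mem_support hp hβ)).const_mul _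

lemma integral_polyFun (hμ : μ ∈ MomentSet d m M) (hp : p.totalDegree ≤ m) :
    ∫ᵛ x, polyFun p x ∂[.mul ℝ ℂ; μ] = ∑ β ∈ p.support, p.coeff β * M β := by
  obtain ⟨hint, hmom⟩ := mem_momentSet_iff.1 hμ
  rw [polyFun_eq_sum, VectorMeasure.integral_finsetSum _ fun β hβ ↦
    (integrable_prod_pow hint (sum_le_of_mem_support hp hβ)).const_mul _]
  exact Finset.sum_congr rfl fun β hβ ↦ by
    rw [vectorIntegral_const_mul, hmom β (sum_le_of_mem_support hp hβ)]

end Polynomial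

section Metric

variable {d m : ℕ} {M : (Fin d → ℕ) → ℂ} {μ ν : ComplexMeasure (Vd d)}

lemma ftc_injective : Function.Injective (ftc : ComplexMeasure (Vd d) → Vd d → ℂ) :=
  fun μ ν h ↦ complexCharFun_injective <| funext fun ξ ↦ by
    simpa only [ftc_eq_complexCharFun, neg_neg] using congrFun h (-ξ)

lemma ftc_add (μ ν : ComplexMeasure (Vd d)) (ξ : Vd d) : ftc (μ + ν) ξ = ftc μ ξ + ftc ν ξ := by
  simp only [ftc_eq_complexCharFun]
  exact VectorMeasure.integral_add_vectorMeasure (integrable_exp_inner_mul_I μ _)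
    (integrable_exp_inner_mul_I ν _)

lemma ftc_sum {ι : Type*} (s : Finset ι) (μ : ι → ComplexMeasure (Vd d)) (ξ : Vd d) :
    ftc (∑ k ∈ s, μ k) ξ = ∑ k ∈ s, ftc (μ k) ξ :=
  map_sum (AddMonoidHom.mk' (ftc · ξ) fun μ ν ↦ ftc_add μ ν ξ) μ s

lemma ftc_zero_right (hμ : μ ∈ MomentSet d m M) : ftc μ 0 = M 0 := by
  rw [← hμ.2 0 (by simp)]
  simp [ftc]

theorem dm_comm (m : ℕ) (μ ν : ComplexMeasure (Vd d)) : dm m μ ν = dm m ν μ := by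
  simp only [dm, norm_sub_rev]

theorem dm_triangle (m : ℕ) (μ ν ρ : ComplexMeasure (Vd d)) :
    dm m μ ρ ≤ dm m μ ν + dm m ν ρ := by
  refine iSup_le fun ξ ↦ ?_
  calc
    ENNReal.ofReal (‖ftc μ ξ - ftc ρ ξ‖ / ‖(ξ : Vd d)‖ ^ m)
      ≤ ENNReal.ofReal (‖ftc μ ξ - ftc ν ξ‖ / ‖(ξ : Vd d)‖ ^ m
          + ‖ftc ν ξ - ftc ρ ξ‖ / ‖(ξ : Vd d)‖ ^ m) := by
      rw [← add_div]
      gcongr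
      exact norm_sub_le_norm_sub_add_norm_sub _ _ _
    _ ≤ dm m μ ν + dm m ν ρ :=
      ENNReal.ofReal_add_le.trans <| add_le_add
        (le_iSup (fun η : {η : Vd d // η ≠ 0} ↦
          ENNReal.ofReal (‖ftc μ η - ftc ν η‖ / ‖(η : Vd d)‖ ^ m)) ξ)
        (le_iSup (fun η : {η : Vd d // η ≠ 0} ↦
          ENNReal.ofReal (‖ftc ν η - ftc ρ η‖ / ‖(η : Vd d)‖ ^ m)) ξ)

lemma dm_le_ofReal {C : ℝ} (h : ∀ ξ, ‖ftc μ ξ - ftc ν ξ‖ ≤ C * ‖ξ‖ ^ m) :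
    dm m μ ν ≤ ENNReal.ofReal C :=
  iSup_le fun ξ ↦ ENNReal.ofReal_le_ofReal <|
    (div_le_iff₀ (pow_pos (norm_pos_iff.2 ξ.2) m)).2 (h ξ)

lemma enorm_ftc_sub_le (hμ : μ ∈ MomentSet d m M) (hν : ν ∈ MomentSet d m M) (ξ : Vd d) :
    ‖ftc μ ξ - ftc ν ξ‖ₑ ≤ dm m μ ν * ‖ξ‖ₑ ^ m := by
  rcases eq_or_ne ξ 0 with rfl | hξ
  · simp [ftc_zero_right hμ, ftc_zero_right hν]
  · have hpos : 0 < ‖ξ‖ ^ m := pow_pos (norm_pos_iff.2 hξ) m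
    have hle : ENNReal.ofReal (‖ftc μ ξ - ftc ν ξ‖ / ‖ξ‖ ^ m) ≤ dm m μ ν :=
      le_iSup (fun η : {η : Vd d // η ≠ 0} ↦
        ENNReal.ofReal (‖ftc μ η - ftc ν η‖ / ‖(η : Vd d)‖ ^ m)) ⟨ξ, hξ⟩
    rwa [ENNReal.ofReal_div_of_pos hpos, ofReal_norm, ENNReal.ofReal_pow (norm_nonneg ξ),
      ofReal_norm, ENNReal.div_le_iff (by simp [hξ]) (by simp)] at hle

theorem dm_eq_zero_iff (hμ : μ ∈ MomentSet d m M) (hν : ν ∈ MomentSet d m M) :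
    dm m μ ν = 0 ↔ μ = ν := by
  constructor
  · refine fun h ↦ ftc_injective <| funext fun ξ ↦ sub_eq_zero.1 <| enorm_eq_zero.1 ?_
    simpa [h] using enorm_ftc_sub_le hμ hν ξ
  · rintro rfl
    simp [dm]

theorem tendsto_ftc_of_tendsto_dm {μs : ℕ → ComplexMeasure (Vd d)}
    (hμs : ∀ j, μs j ∈ MomentSet d m M) (hν : ν ∈ MomentSet d m M)
    (h : Tendsto (fun j ↦ dm m (μs j) ν) atTop (𝓝 0)) (ξ : Vd d) :
    Tendsto (fun j ↦ ftc (μs j) ξ) atTop (𝓝 (ftc ν ξ)) := by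
  rw [tendsto_iff_edist_tendsto_0]
  have hmul : Tendsto (fun j ↦ dm m (μs j) ν * ‖ξ‖ₑ ^ m) atTop (𝓝 0) := by
    simpa only [zero_mul] using ENNReal.Tendsto.mul_const h (.inr (by finiteness))
  refine tendsto_of_tendsto_of_tendsto_of_le_of_le tendsto_const_nhds hmul
    (fun _ ↦ zero_le) fun j ↦ ?_
  rw [edist_eq_enorm_sub]
  exact enorm_ftc_sub_le (hμs j) hν ξ

end Metric

section Finiteness

variable {d m : ℕ} {M : (Fin d → ℕ) → ℂ} {μ ν : ComplexMeasure (Vd d)}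

lemma norm_exp_ofReal_mul_I_sub_sum_le (t : ℝ) (m : ℕ) :
    ‖Complex.exp (t * Complex.I) - ∑ k ∈ Finset.range m, (t * Complex.I) ^ k / k.factorial‖
      ≤ (1 + Real.exp 1) * |t| ^ m := by
  have hnorm : ‖t * Complex.I‖ = |t| := by simp
  rcases le_total |t| 1 with ht | ht
  · calc
      _ ≤ |t| ^ m * Real.exp |t| := hnorm ▸ Complex.norm_exp_sub_sum_le_norm_mul_exp _ m
      _ ≤ (1 + Real.exp 1) * |t| ^ m := by
        rw [mul_comm]
        gcongr
        exact (Real.exp_le_exp.2 ht).trans (le_add_of_nonneg_left zero_le_one)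
  · have hterm (k : ℕ) (hk : k ∈ Finset.range m) :
        ‖(t * Complex.I) ^ k / k.factorial‖ ≤ |t| ^ m * (1 ^ k / k.factorial) := by
      rw [norm_div, norm_pow, hnorm, Complex.norm_natCast, one_pow, ← mul_one_div]
      gcongr
      exact (Finset.mem_range.1 hk).le
    calc
      _ ≤ 1 + ∑ k ∈ Finset.range m, |t| ^ m * (1 ^ k / k.factorial) := by
        refine (norm_sub_le _ _).trans (add_le_add ?_ (norm_sum_le_of_le _ hterm))
        exact (Complex.norm_exp_ofReal_mul_I t).le
      _ ≤ |t| ^ m + |t| ^ m * Real.exp 1 := by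
        rw [← Finset.mul_sum]
        gcongr
        · exact one_le_pow₀ ht
        · exact Real.sum_le_exp_of_nonneg zero_le_one m
      _ = (1 + Real.exp 1) * |t| ^ m := by ring

/-- The Taylor polynomial of degree less than `m` of `x ↦ exp(i⟨x, ξ⟩)`. -/
def expTaylor (m : ℕ) (ξ : Vd d) : MvPolynomial (Fin d) ℂ :=
  ∑ k ∈ Finset.range m, .C (k.factorial : ℂ)⁻¹ * (∑ i, .C (ξ i * Complex.I) * .X i) ^ k

lemma totalDegree_expTaylor_le (ξ : Vd d) : (expTaylor m ξ).totalDegree ≤ m := by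
  have hlin : (∑ i, .C (ξ i * Complex.I) * .X i : MvPolynomial (Fin d) ℂ).totalDegree ≤ 1 :=
    MvPolynomial.totalDegree_finsetSum_le fun i _ ↦
      (MvPolynomial.totalDegree_mul _ _).trans_eq <| by
        rw [MvPolynomial.totalDegree_C, MvPolynomial.totalDegree_X, zero_add]
  refine MvPolynomial.totalDegree_finsetSum_le fun k hk ↦ ?_
  calc
    _ ≤ 0 + k * 1 := by
      refine (MvPolynomial.totalDegree_mul _ _).trans (add_le_add ?_ ?_)
      · rw [MvPolynomial.totalDegree_C]
      · exact (MvPolynomial.totalDegree_pow _ k).trans (Nat.mul_le_mul_left k hlin)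
    _ ≤ m := by simpa using (Finset.mem_range.1 hk).le

lemma polyFun_expTaylor (ξ x : Vd d) :
    polyFun (expTaylor m ξ) x =
      ∑ k ∈ Finset.range m, (inner ℝ x ξ * Complex.I) ^ k / k.factorial := by
  have hinner : ∑ i, ξ i * Complex.I * x i = inner ℝ x ξ * Complex.I := by
    rw [PiLp.inner_apply, Complex.ofReal_sum, Finset.sum_mul]
    refine Finset.sum_congr rfl fun i _ ↦ ?_
    simp only [RCLike.inner_apply, conj_trivial, Complex.ofReal_mul]
    ring
  simp only [polyFun, expTaylor, map_sum, map_mul, map_pow, MvPolynomial.eval_C,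
    MvPolynomial.eval_X, hinner]
  exact Finset.sum_congr rfl fun k _ ↦ inv_mul_eq_div _ _

lemma norm_complexCharFun_sub_integral_expTaylor_le (hμ : μ ∈ MomentSet d m M) (ξ : Vd d) :
    ‖complexCharFun μ ξ - ∫ᵛ x, polyFun (expTaylor m ξ) x ∂[.mul ℝ ℂ; μ]‖
      ≤ (1 + Real.exp 1) * (∫ x, ‖x‖ ^ m ∂μ.variation) * ‖ξ‖ ^ m := by
  have hpoly := integrable_polyFun hμ (totalDegree_expTaylor_le (m := m) ξ)
  have hpoint (x : Vd d) : ‖Complex.exp (inner ℝ x ξ * Complex.I) - polyFun (expTaylor m ξ) x‖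
      ≤ (1 + Real.exp 1) * ‖ξ‖ ^ m * ‖x‖ ^ m := by
    rw [polyFun_expTaylor, mul_assoc, ← mul_pow, mul_comm ‖ξ‖]
    refine (norm_exp_ofReal_mul_I_sub_sum_le _ m).trans ?_
    gcongr
    exact abs_real_inner_le_norm x ξ
  rw [complexCharFun, ← VectorMeasure.integral_fun_sub (integrable_exp_inner_mul_I μ ξ) hpoly]
  calc
    _ ≤ ‖ContinuousLinearMap.mul ℝ ℂ‖ * ∫ x, ‖Complex.exp (inner ℝ x ξ * Complex.I)
          - polyFun (expTaylor m ξ) x‖ ∂μ.variation :=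
      VectorMeasure.norm_integral_le_integral_norm
    _ ≤ 1 * ∫ x, (1 + Real.exp 1) * ‖ξ‖ ^ m * ‖x‖ ^ m ∂μ.variation := by
      refine mul_le_mul (ContinuousLinearMap.opNorm_mul_le ℝ ℂ) ?_
        (integral_nonneg fun _ ↦ norm_nonneg _) zero_le_one
      exact integral_mono ((integrable_exp_inner_mul_I μ ξ).sub hpoly).norm
        ((mem_momentSet_iff.1 hμ).1.const_mul _) hpoint
    _ = _ := by
      rw [integral_const_mul]
      ring

theorem dm_lt_top (hμ : μ ∈ MomentSet d m M) (hν : ν ∈ MomentSet d m M) : dm m μ ν < ⊤ := by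
  let C (ρ : ComplexMeasure (Vd d)) : ℝ := (1 + Real.exp 1) * ∫ x, ‖x‖ ^ m ∂ρ.variation
  suffices h : ∀ ξ, ‖ftc μ ξ - ftc ν ξ‖ ≤ (C μ + C ν) * ‖ξ‖ ^ m from
    (dm_le_ofReal h).trans_lt ENNReal.ofReal_lt_top
  intro ξ
  have hdeg := totalDegree_expTaylor_le (m := m) (-ξ)
  have hμξ := norm_complexCharFun_sub_integral_expTaylor_le hμ (-ξ)
  have hνξ := norm_complexCharFun_sub_integral_expTaylor_le hν (-ξ)
  rw [integral_polyFun hμ hdeg] at hμξ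
  rw [integral_polyFun hν hdeg] at hνξ
  rw [ftc_eq_complexCharFun, ftc_eq_complexCharFun, ← sub_sub_sub_cancel_right]
  refine (norm_sub_le_of_le hμξ hνξ).trans_eq ?_
  rw [norm_neg, ← add_mul]

end Finiteness

section PrescribedMoments

variable {d m : ℕ} {M : (Fin d → ℕ) → ℂ}

lemma exists_finsupp_sum_eq {K X ι : Type*} [Field K] [Finite ι] {v : ι → X → K}
    (hv : LinearIndependent K v) (c : ι → K) :
    ∃ w : X →₀ K, ∀ i, w.sum (fun x a ↦ a * v i x) = c i := by
  let L : (X →₀ K) →ₗ[K] ι → K := Finsupp.linearCombination K fun x i ↦ v i x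
  have := Fintype.ofFinite ι
  have hinj : Function.Injective L.dualMap := by
    rw [injective_iff_map_eq_zero]
    intro f hf
    let a (i : ι) : K := f fun j ↦ if i = j then 1 else 0
    have hfa (c : ι → K) : f c = ∑ i, c i • a i := LinearMap.pi_apply_eq_sum_univ f c
    have hrel : ∑ i, a i • v i = 0 := funext fun x ↦ by
      have hx : f (fun i ↦ v i x) = 0 := by
        simpa [L] using LinearMap.congr_fun hf (Finsupp.single x 1)
      simpa [hfa, mul_comm] using hx
    refine LinearMap.ext fun c ↦ (hfa c).trans ?_
    simp [Fintype.linearIndependent_iff.1 hv a hrel]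
  obtain ⟨w, hw⟩ := LinearMap.dualMap_injective_iff.1 hinj c
  refine ⟨w, fun i ↦ ?_⟩
  rw [← hw, Finsupp.linearCombination_apply, Finsupp.sum_apply']
  rfl

lemma polyFun_injective : Function.Injective (polyFun : MvPolynomial (Fin d) ℂ → Vd d → ℂ) := by
  intro p q h
  refine MvPolynomial.funext_set (fun _ ↦ Set.range ((↑) : ℝ → ℂ))
    (fun _ ↦ Set.infinite_range_of_injective Complex.ofReal_injective) fun z hz ↦ ?_
  choose x hx using fun i ↦ hz i (Set.mem_univ i)
  simpa only [polyFun, hx] using congrFun h (WithLp.toLp 2 x)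

lemma linearIndependent_prod_pow :
    LinearIndependent ℂ fun (β : Fin d → ℕ) (x : Vd d) ↦ ∏ i, (x i : ℂ) ^ β i := by
  let L : MvPolynomial (Fin d) ℂ →ₗ[ℂ] Vd d → ℂ :=
    LinearMap.pi fun x ↦ (MvPolynomial.aeval fun i ↦ (x i : ℂ)).toLinearMap
  have hL : LinearMap.ker L = ⊥ := LinearMap.ker_eq_bot.2 polyFun_injective
  have hmon := ((MvPolynomial.basisMonomials (Fin d) ℂ).linearIndependent.map' L hL).comp
    Finsupp.equivFunOnFinite.symm Finsupp.equivFunOnFinite.symm.injective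
  suffices h : (fun (β : Fin d → ℕ) (x : Vd d) ↦ ∏ i, (x i : ℂ) ^ β i) =
      (L ∘ MvPolynomial.basisMonomials (Fin d) ℂ) ∘ Finsupp.equivFunOnFinite.symm from h ▸ hmon
  ext β x
  simp [L, MvPolynomial.aeval_monomial, Finsupp.prod_fintype]

lemma integral_atomicMeasure_fintype {ι X : Type*} [Fintype ι] [MeasurableSpace ι]
    [MeasurableSingletonClass ι] [MeasurableSpace X] (w : ι → ℂ) (x : ι → X) {f : X → ℂ}
    (hf : StronglyMeasurable f) :
    ∫ᵛ y, f y ∂[.mul ℝ ℂ; atomicMeasure w x] = ∑ i, f (x i) * w i :=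
  (hasSum_integral_atomicMeasure hf .of_finite .of_finite).unique (hasSum_fintype _)

lemma atomicMeasure_mem_momentSet {ι : Type*} [Fintype ι] [MeasurableSpace ι]
    [MeasurableSingletonClass ι] {w : ι → ℂ} {x : ι → Vd d}
    (h : ∀ β : Fin d → ℕ, ∑ j, β j ≤ m → ∑ i, (∏ j, (x i j : ℂ) ^ β j) * w i = M β) :
    atomicMeasure w x ∈ MomentSet d m M := by
  refine mem_momentSet_iff.2 ⟨integrable_norm_pow_iff.2 ?_, fun β hβ ↦ ?_⟩
  · refine (lintegral_variation_atomicMeasure_le (by fun_prop) .of_finite).trans_lt ?_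
    rw [tsum_fintype]
    exact ENNReal.sum_lt_top.2 fun _ _ ↦ by finiteness
  · rw [integral_atomicMeasure_fintype w x (by fun_prop), h β hβ]

theorem momentSet_nonempty (d m : ℕ) (M : (Fin d → ℕ) → ℂ) : (MomentSet d m M).Nonempty := by
  have hfin : Finite {β : Fin d → ℕ // ∑ j, β j ≤ m} :=
    (Set.finite_Iic fun _ : Fin d ↦ m).subset fun β hβ i ↦
      (Finset.single_le_sum (fun _ _ ↦ zero_le) (Finset.mem_univ i)).trans hβ
  obtain ⟨w, hw⟩ := exists_finsupp_sum_eq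
    (linearIndependent_prod_pow.comp _ Subtype.val_injective)
    fun β : {β : Fin d → ℕ // ∑ j, β j ≤ m} ↦ M β
  refine ⟨atomicMeasure (fun x : w.support ↦ w x) (↑), atomicMeasure_mem_momentSet fun β hβ ↦ ?_⟩
  rw [← hw ⟨β, hβ⟩, Finsupp.sum, ← Finset.sum_coe_sort w.support]
  simp only [mul_comm, Function.comp_apply]

end PrescribedMoments

section Difference

/-- The coefficient `(-1)^(n-i) * C(n, i)` of `f(x + ih)` in the `n`-th forward difference of `f`
with step `h`. -/
def diffCoeff (n i : ℕ) : ℂ :=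
  ((-1) ^ (n - i) * n.choose i : ℤ)

lemma norm_diffCoeff (n i : ℕ) : ‖diffCoeff n i‖ = n.choose i := by
  rw [diffCoeff, Complex.norm_intCast, Int.cast_mul, abs_mul, Int.cast_pow, abs_pow]
  simp

lemma sum_mul_diffCoeff {X : Type*} [AddCommMonoid X] (n : ℕ) (a : ℂ) (h : X) (f : X → ℂ) :
    ∑ i : Fin (n + 1), f ((i : ℕ) • h) * (a * diffCoeff n i) = a * (fwdDiff h)^[n] f 0 := by
  rw [fwdDiff_iter_eq_sum_shift, Finset.sum_range, Finset.mul_sum]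
  refine Finset.sum_congr rfl fun i _ ↦ ?_
  rw [zero_add, zsmul_eq_mul, diffCoeff]
  ring

/-- The measure `a ∑ i, (-1)^(n-i) C(n, i) δ_{ih}`, integration against which is `a` times the
`n`-th forward difference with step `h` at the origin. -/
def diffMeasure {X : Type*} [AddCommMonoid X] [MeasurableSpace X] (n : ℕ) (a : ℂ) (h : X) :
    ComplexMeasure X :=
  atomicMeasure (fun i : Fin (n + 1) ↦ a * diffCoeff n i) fun i ↦ (i : ℕ) • h

/-- The superposition `∑ k, diffMeasure n (a k) (h k)` of a sequence of difference measures, encoded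
as a single atomic measure. -/
def diffSeries {X : Type*} [AddCommMonoid X] [MeasurableSpace X] (n : ℕ) (a : ℕ → ℂ) (h : ℕ → X) :
    ComplexMeasure X :=
  atomicMeasure (fun p : ℕ × Fin (n + 1) ↦ a p.1 * diffCoeff n p.2) fun p ↦ (p.2 : ℕ) • h p.1

lemma fwdDiff_iter_prod_pow_eq_zero {d n : ℕ} {β : Fin d → ℕ} (hβ : ∑ j, β j < n) (h : Vd d) :
    (fwdDiff h)^[n] (fun x ↦ ∏ j, (x j : ℂ) ^ β j) 0 = 0 := by
  have hpow := congrFun (fwdDiff_iter_pow_eq_zero_of_lt (R := ℂ) hβ) 0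
  rw [fwdDiff_iter_eq_sum_shift] at hpow ⊢
  refine Eq.trans ?_ (mul_eq_zero_of_right (∏ j, (h j : ℂ) ^ β j) hpow)
  rw [Finset.mul_sum]
  refine Finset.sum_congr rfl fun k _ ↦ ?_
  simp only [zero_add, PiLp.smul_apply, nsmul_eq_mul, mul_one, Complex.ofReal_mul,
    Complex.ofReal_natCast, mul_pow, Finset.prod_mul_distrib, Finset.prod_pow_eq_pow_sum,
    zsmul_eq_mul]
  ring

lemma diffMeasure_mem_momentSet {d m n : ℕ} (hmn : m < n) (a : ℂ) (h : Vd d) :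
    diffMeasure n a h ∈ MomentSet d m 0 :=
  atomicMeasure_mem_momentSet fun β hβ ↦ by
    rw [sum_mul_diffCoeff n a h fun x ↦ ∏ j, (x j : ℂ) ^ β j,
      fwdDiff_iter_prod_pow_eq_zero (hβ.trans_lt hmn), mul_zero, Pi.zero_apply]

lemma summable_norm_mul_diffCoeff {n : ℕ} {a : ℕ → ℂ} (ha : Summable (‖a ·‖)) :
    Summable fun p : ℕ × Fin (n + 1) ↦ ‖a p.1 * diffCoeff n p.2‖ := by
  simp only [norm_mul]
  exact ha.mul_of_nonneg (g := fun i : Fin (n + 1) ↦ ‖diffCoeff n i‖) .of_finite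
    (fun _ ↦ norm_nonneg _) fun _ ↦ norm_nonneg _

variable {E : Type*} [NormedAddCommGroup E] [InnerProductSpace ℝ E] [MeasurableSpace E]
  [BorelSpace E]

lemma complexCharFun_diffMeasure (n : ℕ) (a : ℂ) (h ξ : E) :
    complexCharFun (diffMeasure n a h) ξ =
      a * (Complex.exp (inner ℝ h ξ * Complex.I) - 1) ^ n := by
  let φ : AddChar E ℂ :=
    { toFun x := Complex.exp (inner ℝ x ξ * Complex.I)
      map_zero_eq_one' := by simp
      map_add_eq_mul' x y := by simp [inner_add_left, add_mul, Complex.exp_add] }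
  rw [complexCharFun, diffMeasure, integral_atomicMeasure_fintype _ _
    (continuous_exp_inner_mul_I ξ).stronglyMeasurable]
  calc
    _ = a * (fwdDiff h)^[n] φ 0 := sum_mul_diffCoeff n a h φ
    _ = a * (φ h - 1) ^ n := by rw [fwdDiff_addChar_eq, φ.map_zero_eq_one, mul_one]

lemma hasSum_complexCharFun_diffMeasure {a : ℕ → ℂ} (ha : Summable (‖a ·‖)) (n : ℕ) (h : ℕ → E)
    (ξ : E) : HasSum (fun k ↦ complexCharFun (diffMeasure n (a k) (h k)) ξ)
      (complexCharFun (diffSeries n a h) ξ) := by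
  have hexp := (continuous_exp_inner_mul_I ξ).stronglyMeasurable
  have hw := summable_norm_mul_diffCoeff (n := n) ha
  have hsum := hasSum_integral_atomicMeasure (x := fun p : ℕ × Fin (n + 1) ↦ (p.2 : ℕ) • h p.1)
    hexp hw (by simpa only [Complex.norm_exp_ofReal_mul_I, mul_one] using hw)
  refine (hsum.prod_fiberwise fun k ↦ hasSum_fintype _).congr_fun fun k ↦ ?_
  exact integral_atomicMeasure_fintype _ _ hexp

end Difference

section Atoms

variable {ι X F : Type*} [MeasurableSpace X] [MeasurableSingletonClass X] [Countable ι]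

lemma atomicMeasure_singleton [MeasurableSpace ι] [MeasurableSingletonClass ι] {w : ι → ℂ}
    {x : ι → X} (hw : Summable (‖w ·‖)) {i₀ : ι} (h : ∀ i, x i = x i₀ → i = i₀) :
    atomicMeasure w x {x i₀} = w i₀ := by
  have hpre : x ⁻¹' {x i₀} = {i₀} :=
    Set.eq_singleton_iff_unique_mem.2 ⟨rfl, h⟩
  rw [atomicMeasure, VectorMeasure.map_apply _ .of_discrete (measurableSet_singleton _), hpre,
    withDensityᵥ_count_singleton hw]

lemma tsum_mul_enorm_singleton_le [NormedAddCommGroup F] (μ : VectorMeasure X F) (g : X → ℝ≥0∞)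
    {y : ι → X} (hy : Function.Injective y) :
    ∑' i, g (y i) * ‖μ {y i}‖ₑ ≤ ∫⁻ x, g x ∂μ.variation :=
  calc
    ∑' i, g (y i) * ‖μ {y i}‖ₑ ≤ ∑' i, ∫⁻ x in {y i}, g x ∂μ.variation :=
      ENNReal.tsum_le_tsum fun i ↦ by
        rw [lintegral_singleton]
        gcongr
        exact VectorMeasure.enorm_measure_le_variation μ _
    _ = ∫⁻ x in ⋃ i, {y i}, g x ∂μ.variation :=
      (lintegral_iUnion (fun _ ↦ measurableSet_singleton _)
        (fun _ _ hij ↦ Set.disjoint_singleton.2 (hy.ne hij)) g).symm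
    _ ≤ ∫⁻ x, g x ∂μ.variation := setLIntegral_le_lintegral _ g

end Atoms

section LacunaryEstimates

lemma le_inv_of_le_one {u : ℝ} (hu : 0 ≤ u) (hu1 : u ≤ 1) : u ≤ u⁻¹ := by
  rcases hu.eq_or_lt with rfl | hu0
  · rw [inv_zero]
  · exact hu1.trans ((one_le_inv₀ hu0).2 hu1)

-- The right side telescopes along `u, R u, R² u, …`, which bounds the sum of the minima over all
-- scales without splitting it where `R^k u` crosses `1`.
lemma min_inv_le_telescope {R u : ℝ} (hR : 2 ≤ R) (hu : 0 ≤ u) :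
    min u u⁻¹ ≤ 6 * (R * u / (1 + R * u) - u / (1 + u)) := by
  have : 0 ≤ R := zero_le_two.trans hR
  have hdiff : R * u / (1 + R * u) - u / (1 + u) = (R - 1) * u / ((1 + R * u) * (1 + u)) := by
    field_simp
    ring
  rw [hdiff, ← mul_div_assoc, le_div_iff₀ (by positivity)]
  rcases le_total u 1 with hu1 | hu1
  · have hle : min u u⁻¹ ≤ u := min_le_left _ _
    calc
      min u u⁻¹ * ((1 + R * u) * (1 + u)) ≤ u * ((1 + R * 1) * (1 + 1)) := by gcongr
      _ ≤ 6 * ((R - 1) * u) := by nlinarith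
  · have hle : min u u⁻¹ ≤ u⁻¹ := min_le_right _ _
    have : 0 < u := zero_lt_one.trans_le hu1
    calc
      min u u⁻¹ * ((1 + R * u) * (1 + u)) ≤ u⁻¹ * ((u + R * u) * (u + u)) := by gcongr
      _ = 2 * (1 + R) * u := by
        field_simp
        ring
      _ ≤ 6 * ((R - 1) * u) := by nlinarith

lemma sum_min_geometric_le {R t : ℝ} (hR : 2 ≤ R) (ht : 0 ≤ t) (n : ℕ) :
    ∑ k ∈ Finset.range n, min (R ^ k * t) (R ^ k * t)⁻¹ ≤ 6 := by
  have : 0 ≤ R := zero_le_two.trans hR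
  let g (k : ℕ) : ℝ := R ^ k * t / (1 + R ^ k * t)
  have hg0 : 0 ≤ g 0 := by positivity
  have hgn : g n ≤ 1 := div_le_one_of_le₀ (le_add_of_nonneg_left zero_le_one) (by positivity)
  calc
    _ ≤ ∑ k ∈ Finset.range n, 6 * (g (k + 1) - g k) := by
      gcongr with k
      have hk := min_inv_le_telescope hR (u := R ^ k * t) (by positivity)
      rwa [← mul_assoc, ← pow_succ'] at hk
    _ = 6 * (g n - g 0) := by rw [← Finset.mul_sum, Finset.sum_range_sub]
    _ ≤ 6 := by linarith

lemma eq_one_and_eq_of_mul_pow_eq_pow {R i k l : ℕ} (hR : 1 < R) (hi : i < R)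
    (h : i * R ^ l = R ^ k) : i = 1 ∧ l = k := by
  have hi0 : 0 < i := Nat.pos_of_ne_zero fun hi0 ↦ by
    rw [hi0, zero_mul] at h
    exact (pow_pos (zero_lt_one.trans hR) k).ne h
  have hlk : l ≤ k := (Nat.pow_le_pow_iff_right hR).1 (h ▸ Nat.le_mul_of_pos_left _ hi0)
  have hkl : k ≤ l := Nat.lt_succ_iff.1 <| (Nat.pow_lt_pow_iff_right hR).1 <| by
    rw [← h, pow_succ']
    gcongr
  obtain rfl := hlk.antisymm hkl
  exact ⟨Nat.eq_of_mul_eq_mul_right (pow_pos (zero_lt_one.trans hR) l) (by rw [h, one_mul]), rfl⟩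

lemma norm_complexCharFun_diffMeasure_le {E : Type*} [NormedAddCommGroup E]
    [InnerProductSpace ℝ E] [MeasurableSpace E] [BorelSpace E] {m : ℕ} (hm : 1 ≤ m) (a : ℂ)
    (h ξ : E) : ‖complexCharFun (diffMeasure (m + 1) a h) ξ‖ ≤
      ‖a‖ * 2 ^ (m + 1) * |inner ℝ h ξ| ^ m * min |inner ℝ h ξ| |inner ℝ h ξ|⁻¹ := by
  set u := |inner ℝ h ξ|
  set z := Complex.exp (inner ℝ h ξ * Complex.I) with hz
  have hzu : ‖z - 1‖ ≤ u := by
    rw [hz, mul_comm]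
    exact Real.norm_exp_I_mul_ofReal_sub_one_le
  have hz2 : ‖z - 1‖ ≤ 2 :=
    (norm_sub_le_of_le (Complex.norm_exp_ofReal_mul_I _).le norm_one.le).trans_eq one_add_one_eq_two
  suffices hpow : ‖z - 1‖ ^ (m + 1) ≤ 2 ^ (m + 1) * (u ^ m * min u u⁻¹) by
    rw [complexCharFun_diffMeasure, norm_mul, norm_pow, mul_assoc, mul_assoc]
    gcongr
  rcases le_total u 1 with hu1 | hu1
  · calc
      ‖z - 1‖ ^ (m + 1) ≤ 1 * u ^ (m + 1) := by
        rw [one_mul]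
        gcongr
      _ ≤ 2 ^ (m + 1) * (u ^ m * min u u⁻¹) := by
        rw [pow_succ u, min_eq_left (le_inv_of_le_one (abs_nonneg _) hu1)]
        gcongr
        exact one_le_pow₀ one_le_two
  · calc
      ‖z - 1‖ ^ (m + 1) ≤ 2 ^ (m + 1) * 1 := by
        rw [mul_one]
        gcongr
      _ ≤ 2 ^ (m + 1) * (u ^ m * min u u⁻¹) := by
        rw [min_eq_right ((inv_le_one_of_one_le₀ hu1).trans hu1), ← div_eq_mul_inv]
        gcongr
        rw [one_le_div₀ (by positivity)]
        exact le_self_pow₀ hu1 (by lia)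

end LacunaryEstimates

section Blocks

/-- The weights `1 / ((k + 1) R^(km))`, with `R = m + 2`, of the lacunary blocks: they make the
`m`-th absolute moment of `block m e k` comparable to `1 / (k + 1)`. -/
def blockWeight (m k : ℕ) : ℂ :=
  (((k + 1) * (m + 2) ^ (k * m))⁻¹ : ℝ)

/-- The steps `R^k e`, with `R = m + 2`, of the lacunary blocks in the direction `e`. The nodes of
`block m e k` are the points `i R^k e` with `i < R`, so `R^k e` is a node of no other block. -/
def blockStep {E : Type*} [AddMonoid E] (m : ℕ) (e : E) (k : ℕ) : E :=
  (m + 2) ^ k • e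

/-- The `k`-th lacunary block: a multiple of the difference measure of order `m + 1`, whose moments
up to order `m` vanish. -/
def block {E : Type*} [AddCommMonoid E] [MeasurableSpace E] (m : ℕ) (e : E) (k : ℕ) :
    ComplexMeasure E :=
  diffMeasure (m + 1) (blockWeight m k) (blockStep m e k)

lemma norm_blockWeight (m k : ℕ) : ‖blockWeight m k‖ = ((k + 1) * (m + 2) ^ (k * m) : ℝ)⁻¹ := by
  rw [blockWeight, Complex.norm_real, Real.norm_of_nonneg (by positivity)]

lemma summable_norm_blockWeight {m : ℕ} (hm : 1 ≤ m) : Summable (‖blockWeight m ·‖) := by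
  refine .of_nonneg_of_le (fun _ ↦ norm_nonneg _) (fun k ↦ ?_) summable_geometric_two
  rw [norm_blockWeight, one_div, inv_pow]
  refine inv_anti₀ (by positivity) ?_
  calc
    (2 : ℝ) ^ k ≤ (m + 2) ^ k := by
      gcongr
      exact le_add_of_nonneg_left m.cast_nonneg
    _ ≤ (m + 2) ^ (k * m) := by
      gcongr
      · exact one_le_two.trans (le_add_of_nonneg_left m.cast_nonneg)
      · exact Nat.le_mul_of_pos_right k hm
    _ ≤ (k + 1) * (m + 2) ^ (k * m) :=
      le_mul_of_one_le_left (by positivity) (le_add_of_nonneg_left k.cast_nonneg)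

variable {E : Type*} [NormedAddCommGroup E] [NormedSpace ℝ E]

lemma norm_blockStep (m : ℕ) (e : E) (k : ℕ) : ‖blockStep m e k‖ = (m + 2) ^ k * ‖e‖ := by
  rw [blockStep, ← Nat.cast_smul_eq_nsmul ℝ, norm_smul, Real.norm_natCast]
  push_cast
  rfl

lemma nsmul_blockStep_eq_blockStep {m i k l : ℕ} {e : E} (he : e ≠ 0) (hi : i < m + 2)
    (h : i • blockStep m e l = blockStep m e k) : i = 1 ∧ l = k := by
  rw [blockStep, blockStep, smul_smul, ← Nat.cast_smul_eq_nsmul ℝ,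
    ← Nat.cast_smul_eq_nsmul ℝ ((m + 2) ^ k)] at h
  exact eq_one_and_eq_of_mul_pow_eq_pow (by lia) hi
    (Nat.cast_injective (smul_left_injective ℝ he h))

lemma blockStep_injective {e : E} (he : e ≠ 0) (m : ℕ) : Function.Injective (blockStep m e) :=
  fun k l h ↦ (nsmul_blockStep_eq_blockStep he (by lia : 1 < m + 2) (by rwa [one_smul])).2

end Blocks

section LacunarySeries

variable {E : Type*} [NormedAddCommGroup E] [InnerProductSpace ℝ E] [MeasurableSpace E]
  [BorelSpace E] {m : ℕ}

lemma norm_complexCharFun_block_le (hm : 1 ≤ m) (e ξ : E) (k : ℕ) :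
    ‖complexCharFun (block m e k) ξ‖ ≤ 2 ^ (m + 1) / (k + 1) * |inner ℝ e ξ| ^ m *
      min ((m + 2) ^ k * |inner ℝ e ξ|) ((m + 2) ^ k * |inner ℝ e ξ|)⁻¹ := by
  have hinner : |inner ℝ (blockStep m e k) ξ| = (m + 2) ^ k * |inner ℝ e ξ| := by
    rw [blockStep, ← Nat.cast_smul_eq_nsmul ℝ, real_inner_smul_left, abs_mul, Nat.abs_cast]
    push_cast
    rfl
  refine (norm_complexCharFun_diffMeasure_le hm _ _ ξ).trans_eq ?_
  rw [hinner, norm_blockWeight]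
  congr 1
  rw [mul_pow, ← pow_mul]
  field_simp

lemma sum_norm_complexCharFun_block_le (hm : 1 ≤ m) {e : E} (he : ‖e‖ = 1) (ξ : E) (l j : ℕ) :
    ∑ k ∈ Finset.Ico l j, ‖complexCharFun (block m e k) ξ‖ ≤
      6 * 2 ^ (m + 1) / (l + 1) * ‖ξ‖ ^ m := by
  set t := |inner ℝ e ξ|
  have ht : t ≤ ‖ξ‖ := by simpa only [he, one_mul] using abs_real_inner_le_norm e ξ
  let c (k : ℕ) : ℝ := min ((m + 2) ^ k * t) ((m + 2) ^ k * t)⁻¹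
  have (k : ℕ) : 0 ≤ c k := by positivity
  calc
    _ ≤ ∑ k ∈ Finset.Ico l j, 2 ^ (m + 1) / (l + 1) * ‖ξ‖ ^ m * c k := by
      refine Finset.sum_le_sum fun k hk ↦ (norm_complexCharFun_block_le hm e ξ k).trans ?_
      gcongr
      exact (Finset.mem_Ico.1 hk).1
    _ ≤ 2 ^ (m + 1) / (l + 1) * ‖ξ‖ ^ m * ∑ k ∈ Finset.range j, c k := by
      rw [← Finset.mul_sum]
      gcongr
      rw [Finset.range_eq_Ico]
      exact Finset.Ico_subset_Ico_left l.zero_le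
    _ ≤ 2 ^ (m + 1) / (l + 1) * ‖ξ‖ ^ m * 6 := by
      gcongr
      exact sum_min_geometric_le (le_add_of_nonneg_left m.cast_nonneg) (abs_nonneg _) j
    _ = 6 * 2 ^ (m + 1) / (l + 1) * ‖ξ‖ ^ m := by ring

lemma norm_diffSeries_blockStep (hm : 1 ≤ m) {e : E} (he : e ≠ 0) (k : ℕ) :
    ‖diffSeries (m + 1) (blockWeight m) (blockStep m e) {blockStep m e k}‖ =
      ‖blockWeight m k‖ * (m + 1) := by
  have hatom := atomicMeasure_singleton (i₀ := (k, (1 : Fin (m + 2))))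
    (x := fun p : ℕ × Fin (m + 2) ↦ (p.2 : ℕ) • blockStep m e p.1)
    (summable_norm_mul_diffCoeff (n := m + 1) (summable_norm_blockWeight hm)) fun p hp ↦ by
      rw [Fin.val_one, one_smul] at hp
      obtain ⟨hi, hl⟩ := nsmul_blockStep_eq_blockStep he p.2.2 hp
      exact Prod.ext hl (Fin.ext hi)
  rw [Fin.val_one, one_smul] at hatom
  rw [diffSeries, hatom, norm_mul, norm_diffCoeff, Nat.choose_one_right, Nat.cast_succ]

theorem not_integrable_norm_pow_diffSeries (hm : 1 ≤ m) {e : E} (he : ‖e‖ = 1) :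
    ¬ Integrable (fun x ↦ ‖x‖ ^ m)
      (diffSeries (m + 1) (blockWeight m) (blockStep m e)).variation := by
  set τ := diffSeries (m + 1) (blockWeight m) (blockStep m e)
  have he0 : e ≠ 0 := norm_ne_zero_iff.1 (he.trans_ne one_ne_zero)
  have hmass (k : ℕ) :
      ‖‖blockStep m e k‖ ^ m * ‖τ {blockStep m e k}‖‖ = (m + 1) * (1 / (k + 1 : ℕ)) := by
    rw [norm_diffSeries_blockStep hm he0, norm_blockWeight, norm_blockStep, he]
    rw [Real.norm_of_nonneg (by positivity), mul_one, ← pow_mul]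
    push_cast
    field_simp
  intro hint
  have hsum : Summable fun k ↦ ‖‖blockStep m e k‖ ^ m * ‖τ {blockStep m e k}‖‖ := by
    refine tsum_enorm_ne_top_iff_summable_norm.1 (ne_top_of_le_ne_top hint.2.ne ?_)
    simpa only [enorm_mul, enorm_norm] using tsum_mul_enorm_singleton_le τ (fun x ↦ ‖‖x‖ ^ m‖ₑ)
      (blockStep_injective he0 m)
  simp only [hmass] at hsum
  exact Real.not_summable_one_div_natCast
    ((summable_nat_add_iff 1).1 ((summable_mul_left_iff (by positivity)).1 hsum))

end LacunarySeries

section Incompleteness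

variable {d m : ℕ} {M : (Fin d → ℕ) → ℂ} {μ : ComplexMeasure (Vd d)} {e : Vd d}

/-- The partial sums of the lacunary series in direction `e`, started at `μ`: the non-convergent
Cauchy sequence that witnesses incompleteness. -/
def partialSum (m : ℕ) (μ : ComplexMeasure (Vd d)) (e : Vd d) (j : ℕ) : ComplexMeasure (Vd d) :=
  μ + ∑ k ∈ Finset.range j, block m e k

lemma partialSum_mem_momentSet (hμ : μ ∈ MomentSet d m M) (e : Vd d) (j : ℕ) :
    partialSum m μ e j ∈ MomentSet d m M := by
  have hsum : ∑ k ∈ Finset.range j, block m e k ∈ MomentSet d m 0 :=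
    sum_mem_momentSet_zero fun k _ ↦ diffMeasure_mem_momentSet m.lt_succ_self _ _
  simpa only [partialSum, add_zero] using add_mem_momentSet hμ hsum

lemma ftc_partialSum (m : ℕ) (μ : ComplexMeasure (Vd d)) (e : Vd d) (j : ℕ) (ξ : Vd d) :
    ftc (partialSum m μ e j) ξ =
      ftc μ ξ + ∑ k ∈ Finset.range j, complexCharFun (block m e k) (-ξ) := by
  simp only [partialSum, ftc_add, ftc_sum, ftc_eq_complexCharFun (block _ _ _)]

lemma dm_partialSum_le_of_le (hm : 1 ≤ m) (he : ‖e‖ = 1) (μ : ComplexMeasure (Vd d)) {l j : ℕ}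
    (hlj : l ≤ j) : dm m (partialSum m μ e j) (partialSum m μ e l) ≤
      ENNReal.ofReal (6 * 2 ^ (m + 1) / (l + 1)) :=
  dm_le_ofReal fun ξ ↦ calc
    ‖ftc (partialSum m μ e j) ξ - ftc (partialSum m μ e l) ξ‖ =
        ‖∑ k ∈ Finset.Ico l j, complexCharFun (block m e k) (-ξ)‖ := by
      rw [ftc_partialSum, ftc_partialSum, add_sub_add_left_eq_sub, Finset.sum_Ico_eq_sub _ hlj]
    _ ≤ ∑ k ∈ Finset.Ico l j, ‖complexCharFun (block m e k) (-ξ)‖ := norm_sum_le _ _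
    _ ≤ 6 * 2 ^ (m + 1) / (l + 1) * ‖ξ‖ ^ m := by
      simpa only [norm_neg] using sum_norm_complexCharFun_block_le hm he (-ξ) l j

theorem dm_partialSum_lt (hm : 1 ≤ m) (he : ‖e‖ = 1) (μ : ComplexMeasure (Vd d)) {ε : ℝ}
    (hε : 0 < ε) : ∃ N : ℕ, ∀ j ≥ N, ∀ k ≥ N,
      dm m (partialSum m μ e j) (partialSum m μ e k) < ENNReal.ofReal ε := by
  obtain ⟨N, hN⟩ := exists_nat_gt (6 * 2 ^ (m + 1) / ε)
  have hlt {l j : ℕ} (hl : N ≤ l) (hlj : l ≤ j) :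
      dm m (partialSum m μ e j) (partialSum m μ e l) < ENNReal.ofReal ε := by
    refine (dm_partialSum_le_of_le hm he μ hlj).trans_lt ((ENNReal.ofReal_lt_ofReal_iff hε).2 ?_)
    rw [div_lt_comm₀ (by positivity) hε]
    exact hN.trans (mod_cast Nat.lt_succ_of_le hl)
  refine ⟨N, fun j hj k hk ↦ (le_total k j).elim (hlt hk) fun hjk ↦ ?_⟩
  rw [dm_comm]
  exact hlt hj hjk

lemma tendsto_ftc_partialSum (hm : 1 ≤ m) (μ : ComplexMeasure (Vd d)) (e ξ : Vd d) :
    Tendsto (fun j ↦ ftc (partialSum m μ e j) ξ) atTop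
      (𝓝 (ftc (μ + diffSeries (m + 1) (blockWeight m) (blockStep m e)) ξ)) := by
  simp only [ftc_partialSum, ftc_add,
    ftc_eq_complexCharFun (diffSeries (m + 1) (blockWeight m) (blockStep m e))]
  exact (hasSum_complexCharFun_diffMeasure (summable_norm_blockWeight hm) (m + 1) _
    (-ξ)).tendsto_sum_nat.const_add _

theorem not_tendsto_dm_partialSum (hm : 1 ≤ m) (he : ‖e‖ = 1) (hμ : μ ∈ MomentSet d m M) :
    ¬ ∃ ν ∈ MomentSet d m M, Tendsto (fun j ↦ dm m (partialSum m μ e j) ν) atTop (𝓝 0) := by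
  rintro ⟨ν, hν, hlim⟩
  have hνμ : ν = μ + diffSeries (m + 1) (blockWeight m) (blockStep m e) :=
    ftc_injective <| funext fun ξ ↦ tendsto_nhds_unique
      (tendsto_ftc_of_tendsto_dm (partialSum_mem_momentSet hμ e) hν hlim ξ)
      (tendsto_ftc_partialSum hm μ e ξ)
  refine not_integrable_norm_pow_diffSeries hm he ?_
  rw [← sub_eq_of_eq_add' hνμ]
  exact ((mem_momentSet_iff.1 hν).1.add_measure (mem_momentSet_iff.1 hμ).1).mono_measure
    VectorMeasure.variation_sub_le

end Incompleteness

theorem stmt0_general (d m : ℕ) (hd : 0 < d) (hm : 1 ≤ m) (M : (Fin d → ℕ) → ℂ) :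
    (∀ ν₁ ∈ MomentSet d m M, ∀ ν₂ ∈ MomentSet d m M, dm m ν₁ ν₂ < ⊤) ∧
    (∀ ν₁ ∈ MomentSet d m M, ∀ ν₂ ∈ MomentSet d m M, (dm m ν₁ ν₂ = 0 ↔ ν₁ = ν₂)) ∧
    (∀ ν₁ ν₂ : ComplexMeasure (Vd d), dm m ν₁ ν₂ = dm m ν₂ ν₁) ∧
    (∀ ν₁ ν₂ ν₃ : ComplexMeasure (Vd d), dm m ν₁ ν₃ ≤ dm m ν₁ ν₂ + dm m ν₂ ν₃) ∧
    ∃ μs : ℕ → ComplexMeasure (Vd d),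
      (∀ j, μs j ∈ MomentSet d m M) ∧
      (∀ ε : ℝ, 0 < ε → ∃ N : ℕ, ∀ j ≥ N, ∀ k ≥ N,
        dm m (μs j) (μs k) < ENNReal.ofReal ε) ∧
      ¬ ∃ ν ∈ MomentSet d m M, Tendsto (fun j => dm m (μs j) ν) atTop (𝓝 0) := by
  obtain ⟨μ, hμ⟩ := momentSet_nonempty d m M
  obtain ⟨e, he⟩ : ∃ e : Vd d, ‖e‖ = 1 := ⟨EuclideanSpace.single ⟨0, hd⟩ 1, by simp⟩
  exact ⟨fun _ hμ _ hν ↦ dm_lt_top hμ hν, fun _ hμ _ hν ↦ dm_eq_zero_iff hμ hν, dm_comm m,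
    dm_triangle m, partialSum m μ e, partialSum_mem_momentSet hμ e,
    fun _ ↦ dm_partialSum_lt hm he μ, not_tendsto_dm_partialSum hm he hμ⟩

/-- For any integer `m ≥ 2` and prescribed moments `M`, the distance `d_m` is
finite on `𝓜_m^M × 𝓜_m^M` and satisfies the metric axioms there (so `(𝓜_m^M, d_m)` is a metric
space), but this metric space is not complete: there is a `d_m`-Cauchy sequence in `𝓜_m^M`
with no limit in `𝓜_m^M`. -/
theorem stmt0 (d m : ℕ) (hd : 0 < d) (hm : 2 ≤ m) (M : (Fin d → ℕ) → ℂ) :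
    (∀ ν₁ ∈ MomentSet d m M, ∀ ν₂ ∈ MomentSet d m M, dm m ν₁ ν₂ < ⊤) ∧
    (∀ ν₁ ∈ MomentSet d m M, ∀ ν₂ ∈ MomentSet d m M, (dm m ν₁ ν₂ = 0 ↔ ν₁ = ν₂)) ∧
    (∀ ν₁ ν₂ : ComplexMeasure (Vd d), dm m ν₁ ν₂ = dm m ν₂ ν₁) ∧
    (∀ ν₁ ν₂ ν₃ : ComplexMeasure (Vd d), dm m ν₁ ν₃ ≤ dm m ν₁ ν₂ + dm m ν₂ ν₃) ∧
    ∃ μs : ℕ → ComplexMeasure (Vd d),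
      (∀ j, μs j ∈ MomentSet d m M) ∧
      (∀ ε : ℝ, 0 < ε → ∃ N : ℕ, ∀ j ≥ N, ∀ k ≥ N,
        dm m (μs j) (μs k) < ENNReal.ofReal ε) ∧
      ¬ ∃ ν ∈ MomentSet d m M, Tendsto (fun j => dm m (μs j) ν) atTop (𝓝 0) := by
  exact stmt0_general d m hd (by lia) M

end
end

section
/- Fix an integer m ≥ 2 and M = {M_β}_{|β|≤m} ⊆ ℂ. For each δ > 0, the function φ_δ belongs to the Schwartz class 𝒮(ℝ^d). -/
open MeasureTheory Filter Topology
open scoped ENNReal NNReal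

noncomputable section
open scoped Classical


/-!
The Gaussian-like factor `exp (-‖ξ‖ ^ (2 * m))` is a Schwartz function, and Schwartz functions are
stable under multiplication by functions of temperate growth, so it suffices that
`‖ξ‖ ^ (m + 2) * sin (1 / ‖ξ‖ ^ m) * exp (-δ / ‖ξ‖ ^ 2)`, extended by `0`, has temperate growth.
It is the composition of the smooth map `‖ξ‖ ^ 2` with
`t ↦ t ^ a * sin (t ^ b) * exp (-δ / t)`, extended by `0` to `t ≤ 0`. Differentiating the latter
only produces terms of the same shape, with other powers `a` and phase-shifted sines; each of them
is polynomially bounded, since `exp (-δ / t)` beats every negative power of `t` at `0`.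
-/

open Asymptotics Complex
open scoped SchwartzMap Nat

section TemperateGrowth

lemma hasTemperateGrowth_prod {ι E R : Type*} [NormedAddCommGroup E] [NormedSpace ℝ E]
    [NormedCommRing R] [NormedAlgebra ℝ R] {f : ι → E → R} {s : Finset ι}
    (hf : ∀ i ∈ s, (f i).HasTemperateGrowth) :
    (fun x ↦ ∏ i ∈ s, f i x).HasTemperateGrowth := by
  induction s using Finset.induction_on with
  | empty => simp only [Finset.prod_empty, Function.HasTemperateGrowth.const]
  | insert i s hi ih =>
    rw [Finset.forall_mem_insert] at hf
    simpa only [Finset.prod_insert hi] using hf.1.fun_mul (ih hf.2)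

lemma isBigO_one_add_norm_pow_of_le {E : Type*} [SeminormedAddGroup E] {k l : ℕ} (hkl : k ≤ l) :
    (fun x : E ↦ (1 + ‖x‖) ^ k) =O[⊤] fun x ↦ (1 + ‖x‖) ^ l :=
  IsBigO.pow_of_le_right
    (Eventually.of_forall fun x ↦ le_add_of_nonneg_right (norm_nonneg x)) hkl

variable {F : Type*} [NormedAddCommGroup F] [NormedSpace ℝ F]

lemma hasTemperateGrowth_of_forall_hasDerivAt_mem {S : Set (ℝ → F)}
    (hderiv : ∀ f ∈ S, ∃ g ∈ S, ∀ t, HasDerivAt f (g t) t)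
    (hgrowth : ∀ f ∈ S, ∃ k : ℕ, f =O[⊤] fun t ↦ (1 + ‖t‖) ^ k) {f : ℝ → F} (hf : f ∈ S) :
    f.HasTemperateGrowth := by
  have hmem (n : ℕ) : iteratedDeriv n f ∈ S := by
    induction n with
    | zero => rwa [iteratedDeriv_zero]
    | succ n ih =>
      obtain ⟨g, hg, hfg⟩ := hderiv _ ih
      rwa [iteratedDeriv_succ, deriv_eq hfg]
  have hdiff (n : ℕ) : Differentiable ℝ (iteratedDeriv n f) := by
    obtain ⟨g, -, hfg⟩ := hderiv _ (hmem n)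
    exact fun t ↦ (hfg t).differentiableAt
  refine Function.hasTemperateGrowth_iff_isBigO.2
    ⟨contDiff_of_differentiable_iteratedDeriv fun n _ ↦ hdiff n, fun n ↦ ?_⟩
  obtain ⟨k, hk⟩ := hgrowth _ (hmem n)
  refine ⟨k, IsBigO.of_norm_left ?_⟩
  simpa only [norm_iteratedFDeriv_eq_norm_iteratedDeriv] using hk.norm_left

lemma hasTemperateGrowth_of_hasDerivAt_mem_span {s : Set (ℝ → F)}
    (hderiv : ∀ f ∈ s, ∃ g ∈ Submodule.span ℝ s, ∀ t, HasDerivAt f (g t) t)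
    (hgrowth : ∀ f ∈ s, ∃ k : ℕ, f =O[⊤] fun t ↦ (1 + ‖t‖) ^ k) {f : ℝ → F} (hf : f ∈ s) :
    f.HasTemperateGrowth := by
  refine hasTemperateGrowth_of_forall_hasDerivAt_mem (S := Submodule.span ℝ s)
    (fun g hg ↦ ?_) (fun g hg ↦ ?_) (Submodule.subset_span hf)
  · induction hg using Submodule.span_induction with
    | mem g hg => exact hderiv g hg
    | zero => exact ⟨0, zero_mem _, fun t ↦ hasDerivAt_const t 0⟩
    | add g h _ _ ihg ihh =>
      obtain ⟨g', hg', hgg'⟩ := ihg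
      obtain ⟨h', hh', hhh'⟩ := ihh
      exact ⟨g' + h', add_mem hg' hh', fun t ↦ (hgg' t).add (hhh' t)⟩
    | smul c g _ ih =>
      obtain ⟨g', hg', hgg'⟩ := ih
      exact ⟨c • g', Submodule.smul_mem _ c hg', fun t ↦ (hgg' t).const_smul c⟩
  · induction hg using Submodule.span_induction with
    | mem g hg => exact hgrowth g hg
    | zero => exact ⟨0, isBigO_zero _ _⟩
    | add g h _ _ ihg ihh =>
      obtain ⟨k, hk⟩ := ihg
      obtain ⟨l, hl⟩ := ihh
      exact ⟨max k l, (hk.trans (isBigO_one_add_norm_pow_of_le (le_max_left k l))).add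
        (hl.trans (isBigO_one_add_norm_pow_of_le (le_max_right k l)))⟩
    | smul c g _ ih =>
      obtain ⟨k, hk⟩ := ih
      exact ⟨k, hk.const_smul_left c⟩

end TemperateGrowth

section SchwartzExp

lemma one_add_pow_mul_exp_neg_pow_le {n : ℕ} (hn : n ≠ 0) (k : ℕ) {r : ℝ} (hr : 0 ≤ r) :
    (1 + r) ^ k * Real.exp (-r ^ n) ≤ k ! * Real.exp 2 := by
  have hle : r ≤ 1 + r ^ n := by
    rcases le_total r 1 with h | h
    · exact h.trans (le_add_of_nonneg_right (by positivity))
    · exact (le_self_pow₀ h hn).trans (le_add_of_nonneg_left zero_le_one)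
  have hpow : (2 + r ^ n) ^ k ≤ k ! * Real.exp (2 + r ^ n) :=
    (div_le_iff₀' (by positivity)).1 (Real.pow_div_factorial_le_exp _ (by positivity) k)
  calc (1 + r) ^ k * Real.exp (-r ^ n)
      ≤ (2 + r ^ n) ^ k * Real.exp (-r ^ n) := by gcongr ?_ ^ k * _; linarith
    _ ≤ k ! * Real.exp (2 + r ^ n) * Real.exp (-r ^ n) := by gcongr
    _ = k ! * Real.exp 2 := by rw [mul_assoc, ← Real.exp_add, add_neg_cancel_right]

variable {E : Type*} [NormedAddCommGroup E]

lemma norm_iteratedFDeriv_exp_comp_le [NormedSpace ℝ E] {p : E → ℝ} (hp : p.HasTemperateGrowth)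
    (n : ℕ) : ∃ (k : ℕ) (C : ℝ), 0 ≤ C ∧ ∀ x,
      ‖iteratedFDeriv ℝ n (fun x ↦ Real.exp (p x)) x‖ ≤ C * (1 + ‖x‖) ^ k * Real.exp (p x) := by
  obtain ⟨k, C, hC, hpC⟩ := hp.norm_iteratedFDeriv_le_uniform n
  refine ⟨k * n, n ! * (1 + C) ^ n, by positivity, fun x ↦ ?_⟩
  have hexp (i : ℕ) : ‖iteratedFDeriv ℝ i Real.exp (p x)‖ = Real.exp (p x) := by
    rw [norm_iteratedFDeriv_eq_norm_iteratedDeriv, iteratedDeriv_eq_iterate, Real.iter_deriv_exp,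
      Real.norm_of_nonneg (Real.exp_nonneg _)]
  have hone : 1 ≤ (1 + C) * (1 + ‖x‖) ^ k :=
    one_le_mul_of_one_le_of_one_le (le_add_of_nonneg_right hC)
      (one_le_pow₀ (le_add_of_nonneg_right (norm_nonneg x)))
  have hD (i : ℕ) (hi : 1 ≤ i) (hin : i ≤ n) :
      ‖iteratedFDeriv ℝ i p x‖ ≤ ((1 + C) * (1 + ‖x‖) ^ k) ^ i :=
    calc ‖iteratedFDeriv ℝ i p x‖ ≤ C * (1 + ‖x‖) ^ k := hpC i hin x
      _ ≤ (1 + C) * (1 + ‖x‖) ^ k := by gcongr; exact le_add_of_nonneg_left zero_le_one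
      _ ≤ _ := le_self_pow₀ hone (Nat.one_le_iff_ne_zero.1 hi)
  calc ‖iteratedFDeriv ℝ n (fun x ↦ Real.exp (p x)) x‖
      ≤ n ! * Real.exp (p x) * ((1 + C) * (1 + ‖x‖) ^ k) ^ n :=
        norm_iteratedFDeriv_comp_le Real.contDiff_exp hp.1 (mod_cast le_top) x
          (fun i _ ↦ (hexp i).le) hD
    _ = n ! * (1 + C) ^ n * (1 + ‖x‖) ^ (k * n) * Real.exp (p x) := by
        rw [mul_pow, ← pow_mul]; ring

lemma exists_schwartzMap_eq_exp [NormedSpace ℝ E] {p : E → ℝ} (hp : p.HasTemperateGrowth)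
    (hdecay : ∀ k : ℕ, ∃ C, ∀ x, (1 + ‖x‖) ^ k * Real.exp (p x) ≤ C) :
    ∃ G : 𝓢(E, ℝ), ⇑G = fun x ↦ Real.exp (p x) := by
  refine ⟨⟨fun x ↦ Real.exp (p x), Real.contDiff_exp.comp hp.1, fun j n ↦ ?_⟩, rfl⟩
  obtain ⟨k, C, hC, hderiv⟩ := norm_iteratedFDeriv_exp_comp_le hp n
  obtain ⟨B, hB⟩ := hdecay (j + k)
  refine ⟨C * B, fun x ↦ ?_⟩
  calc ‖x‖ ^ j * ‖iteratedFDeriv ℝ n (fun x ↦ Real.exp (p x)) x‖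
      ≤ (1 + ‖x‖) ^ j * (C * (1 + ‖x‖) ^ k * Real.exp (p x)) := by
        gcongr
        · exact le_add_of_nonneg_left zero_le_one
        · exact hderiv x
    _ = C * ((1 + ‖x‖) ^ (j + k) * Real.exp (p x)) := by ring
    _ ≤ C * B := by gcongr; exact hB x

lemma exists_schwartzMap_eq_exp_neg_norm_pow [InnerProductSpace ℝ E] {m : ℕ} (hm : m ≠ 0) :
    ∃ G : 𝓢(E, ℝ), ⇑G = fun x ↦ Real.exp (-‖x‖ ^ (2 * m)) := by
  refine exists_schwartzMap_eq_exp ?_ fun k ↦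
    ⟨_, fun x ↦ one_add_pow_mul_exp_neg_pow_le (mul_ne_zero two_ne_zero hm) k (norm_nonneg x)⟩
  simp only [pow_mul]
  fun_prop

end SchwartzExp

section DampedSin

/-- The function `t ^ a * sin (t ^ b + θ) * exp (-δ / t)` on the open half-line, extended by `0`.
It carries the singular oscillation of `φ_δ` in the variable `t = ‖ξ‖ ^ 2`; the phase `θ` makes the
linear span over `a` and `θ` stable under differentiation, a cosine being a shifted sine. -/
def dampedSin (b δ a θ t : ℝ) : ℝ :=
  if 0 < t then t ^ a * Real.sin (t ^ b + θ) * Real.exp (-δ / t) else 0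

variable {b δ a θ t : ℝ}

lemma dampedSin_of_pos (ht : 0 < t) :
    dampedSin b δ a θ t = t ^ a * Real.sin (t ^ b + θ) * Real.exp (-δ / t) :=
  if_pos ht

lemma dampedSin_of_nonpos (ht : t ≤ 0) : dampedSin b δ a θ t = 0 :=
  if_neg ht.not_gt

lemma dampedSin_eq_sq_mul : dampedSin b δ a θ t = t ^ 2 * dampedSin b δ (a - 2) θ t := by
  rcases le_or_gt t 0 with ht | ht
  · rw [dampedSin_of_nonpos ht, dampedSin_of_nonpos ht, mul_zero]
  · rw [dampedSin_of_pos ht, dampedSin_of_pos ht, Real.rpow_sub ht, Real.rpow_two]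
    field_simp

lemma rpow_mul_exp_neg_div_le (hδ : 0 < δ) {N : ℕ} (hN : |a| ≤ N) (ht : 0 < t) :
    t ^ a * Real.exp (-δ / t) ≤ (1 + N ! / δ ^ N) * (1 + t) ^ N := by
  obtain ⟨hNa, haN⟩ := abs_le.1 hN
  have hexp_le_one : Real.exp (-δ / t) ≤ 1 :=
    Real.exp_le_one_iff.2 (div_nonpos_of_nonpos_of_nonneg (neg_nonpos.2 hδ.le) ht.le)
  have hone : 1 ≤ (1 + t) ^ N := one_le_pow₀ (le_add_of_nonneg_right ht.le)
  have hconst : 0 ≤ N ! / δ ^ N := by positivity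
  rcases le_total 1 t with h1 | h1
  · calc t ^ a * Real.exp (-δ / t) ≤ t ^ (N : ℝ) * 1 := by gcongr
      _ ≤ 1 * (1 + t) ^ N := by
        rw [Real.rpow_natCast, mul_one, one_mul]; gcongr; exact le_add_of_nonneg_left zero_le_one
      _ ≤ _ := by gcongr; exact le_add_of_nonneg_right hconst
  · have hpow : (δ / t) ^ N ≤ N ! * Real.exp (δ / t) :=
      (div_le_iff₀' (by positivity)).1 (Real.pow_div_factorial_le_exp _ (by positivity) N)
    calc t ^ a * Real.exp (-δ / t) ≤ t ^ (-N : ℝ) * Real.exp (-δ / t) := by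
          gcongr ?_ * _; exact Real.rpow_le_rpow_of_exponent_ge ht h1 hNa
      _ = (δ / t) ^ N / δ ^ N * Real.exp (-δ / t) := by
          rw [Real.rpow_neg ht.le, Real.rpow_natCast, div_pow, div_div_cancel_left' (by positivity)]
      _ ≤ N ! * Real.exp (δ / t) / δ ^ N * Real.exp (-δ / t) := by gcongr
      _ = N ! / δ ^ N * 1 := by rw [neg_div, Real.exp_neg]; field_simp
      _ ≤ _ := by gcongr; exact le_add_of_nonneg_left zero_le_one

lemma dampedSin_isBigO (hδ : 0 < δ) :
    ∃ k : ℕ, dampedSin b δ a θ =O[⊤] fun t ↦ (1 + ‖t‖) ^ k := by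
  obtain ⟨N, hN⟩ := exists_nat_ge |a|
  refine ⟨N, isBigO_top.2 ⟨1 + N ! / δ ^ N, fun t ↦ ?_⟩⟩
  rcases le_or_gt t 0 with ht | ht
  · rw [dampedSin_of_nonpos ht, norm_zero]
    positivity
  · rw [dampedSin_of_pos ht, mul_right_comm, norm_mul, Real.norm_of_nonneg (by positivity),
      norm_pow, Real.norm_of_nonneg (by positivity : 0 ≤ 1 + ‖t‖), Real.norm_of_nonneg ht.le]
    exact (mul_le_of_le_one_right (by positivity) (Real.abs_sin_le_one _)).trans
      (rpow_mul_exp_neg_div_le hδ hN ht)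

lemma hasDerivAt_dampedSin_zero (hδ : 0 < δ) : HasDerivAt (dampedSin b δ a θ) 0 0 := by
  obtain ⟨k, hk⟩ := dampedSin_isBigO (b := b) (a := a - 2) (θ := θ) hδ
  have hbdd : dampedSin b δ (a - 2) θ =O[𝓝 0] fun _ ↦ (1 : ℝ) :=
    (hk.mono le_top).trans
      (((by fun_prop : Continuous fun t : ℝ ↦ (1 + ‖t‖) ^ k).tendsto 0).isBigO_one ℝ)
  have hsq : dampedSin b δ a θ =O[𝓝 0] fun t : ℝ ↦ ‖t - 0‖ ^ 2 := by
    rw [funext fun t ↦ dampedSin_eq_sq_mul (b := b) (δ := δ) (a := a) (θ := θ) (t := t)]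
    simpa only [sub_zero, Real.norm_eq_abs, sq_abs, mul_one]
      using (isBigO_refl (fun t : ℝ ↦ t ^ 2) (𝓝 0)).mul hbdd
  simpa using (hsq.hasFDerivAt (𝕜 := ℝ) one_lt_two).hasDerivAt

lemma hasDerivAt_dampedSin_of_pos (ht : 0 < t) :
    HasDerivAt (dampedSin b δ a θ)
      (a * dampedSin b δ (a - 1) θ t + b * dampedSin b δ (a + b - 1) (θ + Real.pi / 2) t +
        δ * dampedSin b δ (a - 2) θ t) t := by
  have hmain := ((Real.hasDerivAt_rpow_const (p := a) (Or.inl ht.ne')).mul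
    ((Real.hasDerivAt_rpow_const (p := b) (Or.inl ht.ne')).add_const θ).sin).mul
    ((hasDerivAt_inv ht.ne').const_mul (-δ)).exp
  refine (hmain.congr_of_eventuallyEq ?_).congr_deriv ?_
  · filter_upwards [Ioi_mem_nhds ht] with x hx
    exact dampedSin_of_pos hx
  · simp only [dampedSin_of_pos ht, ← add_assoc, Real.sin_add_pi_div_two]
    simp only [Real.rpow_sub ht, Real.rpow_add ht, Real.rpow_one, Real.rpow_two, div_eq_mul_inv,
      Pi.mul_apply]
    field_simp

lemma hasDerivAt_dampedSin (hδ : 0 < δ) (t : ℝ) :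
    HasDerivAt (dampedSin b δ a θ)
      (a * dampedSin b δ (a - 1) θ t + b * dampedSin b δ (a + b - 1) (θ + Real.pi / 2) t +
        δ * dampedSin b δ (a - 2) θ t) t := by
  rcases lt_or_ge 0 t with ht | ht
  · exact hasDerivAt_dampedSin_of_pos ht
  simp only [dampedSin_of_nonpos ht, mul_zero, add_zero]
  rcases ht.eq_or_lt with rfl | ht
  · exact hasDerivAt_dampedSin_zero hδ
  · refine (hasDerivAt_const t 0).congr_of_eventuallyEq ?_
    filter_upwards [Iio_mem_nhds ht] with x hx
    exact dampedSin_of_nonpos (le_of_lt hx)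

lemma hasTemperateGrowth_dampedSin (hδ : 0 < δ) : (dampedSin b δ a θ).HasTemperateGrowth := by
  let s : Set (ℝ → ℝ) := Set.range fun p : ℝ × ℝ ↦ dampedSin b δ p.1 p.2
  have hmem (a θ : ℝ) : dampedSin b δ a θ ∈ s := ⟨(a, θ), rfl⟩
  refine hasTemperateGrowth_of_hasDerivAt_mem_span (s := s) ?_ ?_ (hmem a θ)
  · rintro _ ⟨⟨a, θ⟩, rfl⟩
    have hspan (c a θ : ℝ) : c • dampedSin b δ a θ ∈ Submodule.span ℝ s :=
      Submodule.smul_mem _ c (Submodule.subset_span (hmem a θ))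
    exact ⟨_, add_mem (add_mem (hspan _ _ _) (hspan _ _ _)) (hspan _ _ _),
      hasDerivAt_dampedSin hδ⟩
  · rintro _ ⟨⟨a, θ⟩, rfl⟩
    exact dampedSin_isBigO hδ

end DampedSin

section InnerProductSpace

variable {E : Type*} [NormedAddCommGroup E] [InnerProductSpace ℝ E] [DecidableEq E]

lemma hasTemperateGrowth_norm_rpow_mul_sin_mul_exp (a b : ℝ) {δ : ℝ} (hδ : 0 < δ) :
    (fun x : E ↦ if x = 0 then 0 else
      ‖x‖ ^ a * Real.sin (‖x‖ ^ b) * Real.exp (-δ / ‖x‖ ^ 2)).HasTemperateGrowth := by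
  convert (hasTemperateGrowth_dampedSin (b := b / 2) (a := a / 2) (θ := 0) hδ).comp
    (Function.hasTemperateGrowth_norm_sq E) using 1
  funext x
  have hrpow (c : ℝ) : (‖x‖ ^ 2) ^ (c / 2) = ‖x‖ ^ c := by
    rw [← Real.rpow_two, ← Real.rpow_mul (norm_nonneg x), mul_div_cancel₀ c two_ne_zero]
  split_ifs with hx
  · rw [Function.comp_apply, dampedSin_of_nonpos (by simp [hx])]
  · have hpos : 0 < ‖x‖ ^ 2 := by positivity
    rw [Function.comp_apply, dampedSin_of_pos hpos, hrpow, hrpow, add_zero]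

theorem stmt2_general {P : E → ℂ} (hP : P.HasTemperateGrowth) {m : ℕ} (hm : m ≠ 0)
    {δ : ℝ} (hδ : 0 < δ) :
    ∃ ψ : 𝓢(E, ℂ), ⇑ψ = fun ξ ↦ if ξ = 0 then P 0 else
      (P ξ + ((‖ξ‖ ^ (m + 2) * Real.sin (1 / ‖ξ‖ ^ m) * Real.exp (-δ / ‖ξ‖ ^ 2) : ℝ) : ℂ)) *
        ((Real.exp (-‖ξ‖ ^ (2 * m)) : ℝ) : ℂ) := by
  obtain ⟨G, hG⟩ := exists_schwartzMap_eq_exp_neg_norm_pow (E := E) hm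
  have hPf := hP.add (Function.Complex.hasTemperateGrowth_ofReal.comp
    (hasTemperateGrowth_norm_rpow_mul_sin_mul_exp (E := E) (m + 2) (-m) hδ))
  refine ⟨SchwartzMap.bilinLeftCLM (ContinuousLinearMap.lsmul ℝ ℝ) hPf G, funext fun ξ ↦ ?_⟩
  simp only [SchwartzMap.bilinLeftCLM_apply, hG, ContinuousLinearMap.lsmul_apply, real_smul,
    Pi.add_apply, Function.comp_apply]
  rw [mul_comm]
  by_cases hξ : ξ = 0
  · simp [hξ, hm]
  · have hpow : ‖ξ‖ ^ ((m : ℝ) + 2) = ‖ξ‖ ^ (m + 2) := by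
      rw [← Real.rpow_natCast, Nat.cast_add, Nat.cast_ofNat]
    have hinv : ‖ξ‖ ^ (-m : ℝ) = 1 / ‖ξ‖ ^ m := by
      rw [Real.rpow_neg (norm_nonneg ξ), Real.rpow_natCast, one_div]
    simp only [if_neg hξ, hpow, hinv]

end InnerProductSpace

lemma hasTemperateGrowth_Ppoly (d m : ℕ) (M : (Fin d → ℕ) → ℂ) :
    (Ppoly d m M).HasTemperateGrowth := by
  have hcoord (i : Fin d) : (fun ξ : Vd d ↦ (ξ i : ℂ)).HasTemperateGrowth :=
    (ofRealCLM.comp (EuclideanSpace.proj i : Vd d →L[ℝ] ℝ)).hasTemperateGrowth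
  refine Function.HasTemperateGrowth.sum fun γ _ ↦ (Function.HasTemperateGrowth.const _).fun_mul <|
    hasTemperateGrowth_prod fun i _ ↦ ?_
  exact ((Function.HasTemperateGrowth.const _).fun_mul (hcoord i)).fun_pow (γ i)

/-- For `m ≥ 2`, prescribed moments `M` and `δ > 0`, the function `φ_δ`
belongs to the Schwartz class `𝒮(ℝ^d)`. -/
theorem stmt2 (d m : ℕ) (hm : 2 ≤ m) (M : (Fin d → ℕ) → ℂ) (δ : ℝ) (hδ : 0 < δ) :
    ∃ ψ : SchwartzMap (Vd d) ℂ, ⇑ψ = phiFun d m M δ := by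
  exact stmt2_general (hasTemperateGrowth_Ppoly d m M) (Nat.ne_zero_of_lt hm) hδ

end
end

section
/- Fix an integer m ≥ 2 and δ > 0, and let f_δ(ξ) = |ξ|^{m+2} sin(1/|ξ|^m) e^{−δ/|ξ|^2} for ξ ≠ 0, f_δ(0) = 0. For every multi-index β ∈ ℕ^d there exist a constant C > 0 and an integer l ≥ 1 such that |(D^β f_δ)(ξ)| ≤ C(1 + |ξ|^l) for all ξ ∈ ℝ^d. -/
open MeasureTheory Filter Topology
open scoped ENNReal NNReal

noncomputable section
open scoped Classical


/-!
As a function of `s = |ξ|²`, `f_δ` is the member `a = (m + 2) / 2`, `b = m / 2`, `θ = 0` of the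
family `s ^ a * sin (s ^ (-b) + θ) * exp (-δ / s)` on `s > 0`, extended by `0`. Off `0` the
derivative of a member is a combination of members with other `a` and `θ`, and this persists at `0`
because `exp (-δ / s)` beats every power of `s`. That same decay makes every member polynomially
bounded, so every member has temperate growth, and composing with `|ξ|²` preserves temperate growth.
-/

section TemperateGrowth

open Asymptotics

variable {E F : Type*} [NormedAddCommGroup E] [NormedAddCommGroup F]

/-- Polynomial growth of a function, with a bound that holds everywhere (hence the filter `⊤`) and
in the form used for the derivatives of a function of temperate growth. -/
def PolynomiallyBounded (f : E → F) : Prop :=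
  ∃ k : ℕ, f =O[⊤] fun x ↦ (1 + ‖x‖) ^ k

theorem polynomiallyBounded_zero : PolynomiallyBounded (0 : E → F) :=
  ⟨0, isBigO_zero _ _⟩

theorem PolynomiallyBounded.add {f g : E → F} (hf : PolynomiallyBounded f)
    (hg : PolynomiallyBounded g) : PolynomiallyBounded (f + g) := by
  obtain ⟨k, hk⟩ := hf
  obtain ⟨l, hl⟩ := hg
  have h_one_le : 1 ≤ᶠ[⊤] fun x : E ↦ 1 + ‖x‖ :=
    Eventually.of_forall fun x ↦ le_add_of_nonneg_right (norm_nonneg x)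
  exact ⟨max k l, (hk.trans (.pow_of_le_right h_one_le (le_max_left k l))).add
    (hl.trans (.pow_of_le_right h_one_le (le_max_right k l)))⟩

theorem PolynomiallyBounded.exists_norm_le {f : E → F} (hf : PolynomiallyBounded f) :
    ∃ C : ℝ, 0 < C ∧ ∃ l : ℕ, 1 ≤ l ∧ ∀ x, ‖f x‖ ≤ C * (1 + ‖x‖ ^ l) := by
  obtain ⟨k, hk⟩ := hf
  obtain ⟨C, hC, hfC⟩ := hk.exists_pos
  refine ⟨C * 2 ^ k, by positivity, k + 1, by lia, fun x ↦ ?_⟩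
  calc ‖f x‖ ≤ C * (1 + ‖x‖) ^ k := by
        simpa [abs_of_nonneg (add_nonneg zero_le_one (norm_nonneg x))] using isBigOWith_top.1 hfC x
    _ ≤ C * (1 + ‖x‖) ^ (k + 1) := by gcongr <;> simp
    _ ≤ C * (2 ^ k * (1 + ‖x‖ ^ (k + 1))) := by
        gcongr
        simpa using add_pow_le zero_le_one (norm_nonneg x) (k + 1)
    _ = C * 2 ^ k * (1 + ‖x‖ ^ (k + 1)) := by ring

variable [NormedSpace ℝ F]

theorem PolynomiallyBounded.const_smul {f : E → F} (hf : PolynomiallyBounded f) (c : ℝ) :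
    PolynomiallyBounded (c • f) :=
  hf.imp fun _ hk ↦ hk.const_smul_left c

theorem polynomiallyBounded_of_mem_span {s : Set (E → F)} (hs : ∀ f ∈ s, PolynomiallyBounded f)
    {f : E → F} (hf : f ∈ Submodule.span ℝ s) : PolynomiallyBounded f :=
  Submodule.span_induction hs polynomiallyBounded_zero (fun _ _ _ _ ↦ .add)
    (fun c _ _ hf ↦ hf.const_smul c) hf

theorem polynomiallyBounded_of_hasTemperateGrowth [NormedSpace ℝ E] {f : E → F}
    (hf : f.HasTemperateGrowth) : PolynomiallyBounded f := by
  obtain ⟨k, hk⟩ := hf.isBigO 0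
  exact ⟨k, (hk.norm_left.congr_left fun _ ↦ norm_iteratedFDeriv_zero).of_norm_left⟩

theorem hasTemperateGrowth_fderiv [NormedSpace ℝ E] {f : E → F} (hf : f.HasTemperateGrowth) :
    (fderiv ℝ f).HasTemperateGrowth := by
  refine ⟨hf.1.fderiv_right le_rfl, fun n ↦ ?_⟩
  simpa only [norm_iteratedFDeriv_fderiv] using hf.2 (n + 1)

theorem hasTemperateGrowth_of_mapsTo_deriv {V : Set (ℝ → F)}
    (hdiff : ∀ f ∈ V, Differentiable ℝ f) (hderiv : Set.MapsTo deriv V V)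
    (hbound : ∀ f ∈ V, PolynomiallyBounded f) {f : ℝ → F} (hf : f ∈ V) :
    f.HasTemperateGrowth := by
  have hmem (n : ℕ) : iteratedDeriv n f ∈ V := by
    rw [iteratedDeriv_eq_iterate]
    exact hderiv.iterate n hf
  refine Function.hasTemperateGrowth_iff_isBigO.2
    ⟨contDiff_of_differentiable_iteratedDeriv fun n _ ↦ hdiff _ (hmem n), fun n ↦ ?_⟩
  obtain ⟨k, hk⟩ := hbound _ (hmem n)
  exact ⟨k, (hk.norm_left.congr_left fun _ ↦
    norm_iteratedFDeriv_eq_norm_iteratedDeriv.symm).of_norm_left⟩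

theorem differentiable_and_deriv_mem_span {s : Set (ℝ → F)} (hdiff : ∀ f ∈ s, Differentiable ℝ f)
    (hderiv : ∀ f ∈ s, deriv f ∈ Submodule.span ℝ s) {f : ℝ → F} (hf : f ∈ Submodule.span ℝ s) :
    Differentiable ℝ f ∧ deriv f ∈ Submodule.span ℝ s := by
  induction hf using Submodule.span_induction with
  | mem f hf => exact ⟨hdiff f hf, hderiv f hf⟩
  | zero => simp
  | add f g _ _ hf hg =>
    have hadd : deriv (f + g) = deriv f + deriv g := funext fun x ↦ deriv_add (hf.1 x) (hg.1 x)
    exact ⟨hf.1.add hg.1, hadd ▸ add_mem hf.2 hg.2⟩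
  | smul c f _ hf =>
    have hsmul : deriv (c • f) = c • deriv f := funext fun x ↦ deriv_const_smul c (hf.1 x)
    exact ⟨hf.1.const_smul c, hsmul ▸ Submodule.smul_mem _ c hf.2⟩

theorem hasTemperateGrowth_of_deriv_mem_span {s : Set (ℝ → F)}
    (hdiff : ∀ f ∈ s, Differentiable ℝ f) (hderiv : ∀ f ∈ s, deriv f ∈ Submodule.span ℝ s)
    (hbound : ∀ f ∈ s, PolynomiallyBounded f) {f : ℝ → F} (hf : f ∈ s) :
    f.HasTemperateGrowth :=
  hasTemperateGrowth_of_mapsTo_deriv (V := Submodule.span ℝ s)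
    (fun _ hg ↦ (differentiable_and_deriv_mem_span hdiff hderiv hg).1)
    (fun _ hg ↦ (differentiable_and_deriv_mem_span hdiff hderiv hg).2)
    (fun _ ↦ polynomiallyBounded_of_mem_span hbound) (Submodule.subset_span hf)

theorem hasTemperateGrowth_pderiv1 {d : ℕ} (i : Fin d) {f : Vd d → F}
    (hf : f.HasTemperateGrowth) : (pderiv1 i f).HasTemperateGrowth :=
  (ContinuousLinearMap.apply ℝ F (EuclideanSpace.single i (1 : ℝ))).hasTemperateGrowth.comp
    (hasTemperateGrowth_fderiv hf)

theorem hasTemperateGrowth_Dmulti {d : ℕ} (β : Fin d → ℕ) {f : Vd d → F}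
    (hf : f.HasTemperateGrowth) : (Dmulti β f).HasTemperateGrowth := by
  refine List.foldrRecOn _ _ hf fun g hg op hop ↦ ?_
  obtain ⟨i, rfl⟩ := List.mem_ofFn.1 hop
  exact Function.Iterate.rec _ hg (fun _ ↦ hasTemperateGrowth_pderiv1 i) (β i)

end TemperateGrowth

theorem exp_neg_div_le_factorial_div_pow_mul_pow {δ s : ℝ} (hδ : 0 < δ) (hs : 0 < s) (n : ℕ) :
    Real.exp (-δ / s) ≤ n.factorial / δ ^ n * s ^ n := by
  calc Real.exp (-δ / s) = (Real.exp (δ / s))⁻¹ := by rw [neg_div, Real.exp_neg]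
    _ ≤ ((δ / s) ^ n / n.factorial)⁻¹ := by
        gcongr
        exact Real.pow_div_factorial_le_exp _ (by positivity) n
    _ = n.factorial / δ ^ n * s ^ n := by
        rw [inv_div, div_pow]
        field_simp

theorem exists_rpow_mul_exp_neg_div_le {δ : ℝ} (hδ : 0 < δ) (a : ℝ) :
    ∃ (k : ℕ) (C : ℝ), ∀ s, 0 < s → s ^ a * Real.exp (-δ / s) ≤ C * (1 + s) ^ k := by
  obtain ⟨n, hn⟩ := exists_nat_ge (-a)
  obtain ⟨k, hk⟩ := exists_nat_ge (a + n)
  refine ⟨k, n.factorial / δ ^ n, fun s hs ↦ ?_⟩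
  calc s ^ a * Real.exp (-δ / s) ≤ s ^ a * (n.factorial / δ ^ n * s ^ n) := by
        gcongr
        exact exp_neg_div_le_factorial_div_pow_mul_pow hδ hs n
    _ = n.factorial / δ ^ n * s ^ (a + n) := by
        rw [Real.rpow_add_natCast hs.ne']
        ring
    _ ≤ n.factorial / δ ^ n * (1 + s) ^ (a + n) := by
        gcongr <;> linarith
    _ ≤ n.factorial / δ ^ n * (1 + s) ^ k := by
        rw [← Real.rpow_natCast (1 + s)]
        gcongr
        linarith

/-- The flat oscillating function `s ^ a * sin (s ^ (-b) + θ) * exp (-δ / s)` on `s > 0`, extended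
by `0`. The phase `θ` is there so that the cosine produced by differentiation is again of this
form. -/
def flatOsc (δ b a θ s : ℝ) : ℝ :=
  if 0 < s then s ^ a * Real.sin (s ^ (-b) + θ) * Real.exp (-δ / s) else 0

section FlatOsc

variable {δ s : ℝ}

theorem flatOsc_of_pos (δ b a θ : ℝ) (hs : 0 < s) :
    flatOsc δ b a θ s = s ^ a * Real.sin (s ^ (-b) + θ) * Real.exp (-δ / s) :=
  if_pos hs

theorem flatOsc_of_nonpos (δ b a θ : ℝ) (hs : s ≤ 0) : flatOsc δ b a θ s = 0 :=
  if_neg hs.not_gt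

theorem flatOsc_eq_mul_flatOsc_sub_one (δ b a θ s : ℝ) :
    flatOsc δ b a θ s = s * flatOsc δ b (a - 1) θ s := by
  rcases le_or_gt s 0 with hs | hs
  · simp [flatOsc_of_nonpos, hs]
  · rw [flatOsc_of_pos _ _ _ _ hs, flatOsc_of_pos _ _ _ _ hs, Real.rpow_sub_one hs.ne']
    field_simp

theorem abs_flatOsc_le (δ b a θ : ℝ) (hs : 0 < s) :
    |flatOsc δ b a θ s| ≤ s ^ a * Real.exp (-δ / s) := by
  rw [flatOsc_of_pos _ _ _ _ hs, abs_mul, abs_mul, Real.abs_exp, abs_of_pos (by positivity)]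
  gcongr
  exact mul_le_of_le_one_right (by positivity) (Real.abs_sin_le_one _)

theorem polynomiallyBounded_flatOsc (hδ : 0 < δ) (b a θ : ℝ) :
    PolynomiallyBounded (flatOsc δ b a θ) := by
  obtain ⟨k, C, hC⟩ := exists_rpow_mul_exp_neg_div_le hδ a
  refine ⟨k, Asymptotics.isBigO_top.2 ⟨|C|, fun s ↦ ?_⟩⟩
  rcases le_or_gt s 0 with hs | hs
  · rw [flatOsc_of_nonpos _ _ _ _ hs, norm_zero]
    positivity
  · calc ‖flatOsc δ b a θ s‖ ≤ C * (1 + s) ^ k := (abs_flatOsc_le δ b a θ hs).trans (hC s hs)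
      _ ≤ ‖C * (1 + s) ^ k‖ := le_abs_self _
      _ = |C| * ‖(1 + ‖s‖) ^ k‖ := by rw [norm_mul, Real.norm_eq_abs, Real.norm_of_nonneg hs.le]

theorem tendsto_flatOsc_zero (hδ : 0 < δ) (b a θ : ℝ) :
    Tendsto (flatOsc δ b a θ) (𝓝 0) (𝓝 0) := by
  obtain ⟨k, hk⟩ := polynomiallyBounded_flatOsc hδ b (a - 1) θ
  have hbound : Tendsto (fun s : ℝ ↦ s * (1 + ‖s‖) ^ k) (𝓝 0) (𝓝 0) :=
    Continuous.tendsto' (by fun_prop) _ _ (by simp)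
  exact (((Asymptotics.isBigO_refl (fun s : ℝ ↦ s) (𝓝 0)).mul (hk.mono le_top)).trans_tendsto
    hbound).congr fun s ↦ (flatOsc_eq_mul_flatOsc_sub_one δ b a θ s).symm

theorem hasDerivAt_flatOsc_zero (hδ : 0 < δ) (b a θ : ℝ) :
    HasDerivAt (flatOsc δ b a θ) 0 0 := by
  rw [hasDerivAt_iff_tendsto_slope_zero]
  refine ((tendsto_flatOsc_zero hδ b (a - 1) θ).mono_left nhdsWithin_le_nhds).congr' ?_
  filter_upwards [self_mem_nhdsWithin] with s hs
  rw [zero_add, flatOsc_of_nonpos δ b a θ le_rfl, sub_zero, smul_eq_mul,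
    flatOsc_eq_mul_flatOsc_sub_one δ b a, inv_mul_cancel_left₀ hs]

theorem hasDerivAt_rpow_mul_sin_mul_exp (δ b a θ : ℝ) (hs : 0 < s) :
    HasDerivAt (fun s ↦ s ^ a * Real.sin (s ^ (-b) + θ) * Real.exp (-δ / s))
      (a * (s ^ (a - 1) * Real.sin (s ^ (-b) + θ) * Real.exp (-δ / s))
        - b * (s ^ (a - b - 1) * Real.cos (s ^ (-b) + θ) * Real.exp (-δ / s))
        + δ * (s ^ (a - 2) * Real.sin (s ^ (-b) + θ) * Real.exp (-δ / s))) s := by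
  have hpow := Real.hasDerivAt_rpow_const (p := a) (Or.inl hs.ne')
  have hsin := ((Real.hasDerivAt_rpow_const (p := -b) (Or.inl hs.ne')).add_const θ).sin
  have hexp := ((hasDerivAt_inv hs.ne').const_mul (-δ)).exp
  refine ((hpow.mul hsin).mul hexp).congr_deriv ?_
  have hcos_pow : s ^ (a - b - 1) = s ^ a * s ^ (-b - 1) := by
    rw [← Real.rpow_add hs]
    ring_nf
  have hexp_pow : s ^ (a - 2) = s ^ a * (s ^ 2)⁻¹ := by
    rw [Real.rpow_sub hs, Real.rpow_two, div_eq_mul_inv]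
  rw [hcos_pow, hexp_pow]
  simp only [Pi.mul_apply, ← div_eq_mul_inv]
  ring

theorem hasDerivAt_flatOsc (hδ : 0 < δ) (b a θ s : ℝ) :
    HasDerivAt (flatOsc δ b a θ)
      (a * flatOsc δ b (a - 1) θ s - b * flatOsc δ b (a - b - 1) (θ + Real.pi / 2) s
        + δ * flatOsc δ b (a - 2) θ s) s := by
  rcases lt_trichotomy s 0 with hs | rfl | hs
  · simp only [flatOsc_of_nonpos _ _ _ _ hs.le, mul_zero, sub_zero, add_zero]
    refine (hasDerivAt_const s (0 : ℝ)).congr_of_eventuallyEq ?_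
    filter_upwards [Iio_mem_nhds hs] with t ht using flatOsc_of_nonpos _ _ _ _ (le_of_lt ht)
  · simpa only [flatOsc_of_nonpos _ _ _ _ le_rfl, mul_zero, sub_zero, add_zero]
      using hasDerivAt_flatOsc_zero hδ b a θ
  · simp only [flatOsc_of_pos _ _ _ _ hs, ← add_assoc, Real.sin_add_pi_div_two]
    refine (hasDerivAt_rpow_mul_sin_mul_exp δ b a θ hs).congr_of_eventuallyEq ?_
    filter_upwards [Ioi_mem_nhds hs] with t ht using flatOsc_of_pos _ _ _ _ ht

theorem deriv_flatOsc (hδ : 0 < δ) (b a θ : ℝ) :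
    deriv (flatOsc δ b a θ) = a • flatOsc δ b (a - 1) θ
      - b • flatOsc δ b (a - b - 1) (θ + Real.pi / 2) + δ • flatOsc δ b (a - 2) θ :=
  funext fun s ↦ (hasDerivAt_flatOsc hδ b a θ s).deriv

theorem hasTemperateGrowth_flatOsc (hδ : 0 < δ) (b a θ : ℝ) :
    (flatOsc δ b a θ).HasTemperateGrowth := by
  let family : Set (ℝ → ℝ) := {f | ∃ a θ, f = flatOsc δ b a θ}
  have hspan (c a θ : ℝ) : c • flatOsc δ b a θ ∈ Submodule.span ℝ family :=
    Submodule.smul_mem _ c (Submodule.subset_span ⟨a, θ, rfl⟩)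
  refine hasTemperateGrowth_of_deriv_mem_span (s := family) ?_ ?_ ?_ ⟨a, θ, rfl⟩
  · rintro _ ⟨a, θ, rfl⟩ s
    exact (hasDerivAt_flatOsc hδ b a θ s).differentiableAt
  · rintro _ ⟨a, θ, rfl⟩
    rw [deriv_flatOsc hδ]
    exact add_mem (sub_mem (hspan _ _ _) (hspan _ _ _)) (hspan _ _ _)
  · rintro _ ⟨a, θ, rfl⟩
    exact polynomiallyBounded_flatOsc hδ b a θ

theorem flatOsc_sq (δ b a θ : ℝ) (hs : 0 < s) :
    flatOsc δ (b / 2) (a / 2) θ (s ^ 2) =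
      s ^ a * Real.sin (1 / s ^ b + θ) * Real.exp (-δ / s ^ 2) := by
  have hpow (c : ℝ) : (s ^ 2) ^ (c / 2) = s ^ c := by
    rw [← Real.rpow_natCast_mul hs.le]
    congr 1
    push_cast
    ring
  rw [flatOsc_of_pos _ _ _ _ (by positivity), Real.rpow_neg (by positivity), hpow, hpow, one_div]

end FlatOsc

theorem stmt5_general {E : Type*} [NormedAddCommGroup E] [InnerProductSpace ℝ E] (a b : ℝ) {δ : ℝ}
    (hδ : 0 < δ) :
    (fun ξ : E ↦ if ξ = 0 then 0
      else ‖ξ‖ ^ a * Real.sin (1 / ‖ξ‖ ^ b) * Real.exp (-δ / ‖ξ‖ ^ 2)).HasTemperateGrowth := by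
  convert (hasTemperateGrowth_flatOsc hδ (b / 2) (a / 2) 0).comp
    (Function.hasTemperateGrowth_norm_sq E) using 2 with ξ
  split_ifs with hξ
  · simp [hξ, flatOsc_of_nonpos]
  · simpa using (flatOsc_sq δ b a 0 (norm_pos_iff.2 hξ)).symm

/-- For `m ≥ 2`, `δ > 0` and every multi-index `β`, there are a constant
`C > 0` and an integer `l ≥ 1` such that `|(D^β f_δ)(ξ)| ≤ C(1 + |ξ|^l)` for all `ξ`. -/
theorem stmt5 (d m : ℕ) (hm : 2 ≤ m) (δ : ℝ) (hδ : 0 < δ) (β : Fin d → ℕ) :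
    ∃ C : ℝ, 0 < C ∧ ∃ l : ℕ, 1 ≤ l ∧
      ∀ ξ : Vd d, |Dmulti β (fdelta d m δ) ξ| ≤ C * (1 + ‖ξ‖ ^ l) := by
  have hf : (fdelta d m δ).HasTemperateGrowth := by
    simpa only [Real.rpow_natCast] using! stmt5_general (E := Vd d) ((m + 2 : ℕ) : ℝ) m hδ
  exact (polynomiallyBounded_of_hasTemperateGrowth (hasTemperateGrowth_Dmulti β hf)).exists_norm_le

end
end
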